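/- arXiv:1212.0527 — 4 statements merged into one kernel-verified Lean document; each statement's English description precedes it below -/
import Mathlib

section
/- Under Conditions (A)–(D) with b_j ≠ 0 for all j ≥ 1, for every V ∈ 𝒱 and every f ∈ 𝒞 = 𝒱 ∩ C₊(𝒜), the sequence of normalized functions {‖𝔓_k^V f‖_∞^{-1} 𝔓_k^V f, k ≥ 0} is uniformly equicontinuous on 𝒜 (uniform Feller property of the Feynman–Kac semigroup 𝔓_k^V for the determining class 𝒞). -/
open MeasureTheory ProbabilityTheory Filter Topology BoundedContinuousFunction
open scoped ENNReal NNReal Pointwise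

noncomputable section

/-- The sets `𝒜_k(B)`: `𝒜_0(B) = B`, `𝒜_k(B) = S(𝒜_{k-1}(B)) + 𝒦`. -/
def attain {H : Type*} [AddCommGroup H] (S : H → H) (K : Set H) (B : Set H) : ℕ → Set H
  | 0 => B
  | n + 1 => S '' attain S K B n + K

/-- The domain of attainability `𝒜(B)` from `B`: the closure of `⋃_k 𝒜_k(B)`. -/
def attainDom {H : Type*} [AddCommGroup H] [TopologicalSpace H]
    (S : H → H) (K : Set H) (B : Set H) : Set H :=
  closure (⋃ n, attain S K B n)

variable {H : Type} [NormedAddCommGroup H] [InnerProductSpace ℝ H] [CompleteSpace H]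

/-- The orthogonal projection `𝖯_N` onto the span of the first `N` vectors of an orthonormal
basis. -/
def projB (e : HilbertBasis ℕ ℝ H) (N : ℕ) (u : H) : H :=
  ∑ j ∈ Finset.range N, e.repr u j • (e j : H)

/-- Condition (A): regularity and stability. -/
def CondA (S : H → H) : Prop :=
  ContDiff ℝ 1 S ∧
  ∀ R r : ℝ, 0 < r → r < R →
    ∃ C : ℝ, 0 < C ∧ ∃ a : ℝ, 0 < a ∧ a < 1 ∧ ∃ n₀ : ℕ, 1 ≤ n₀ ∧
      (∀ u₁ ∈ Metric.closedBall (0 : H) R, ∀ u₂ ∈ Metric.closedBall (0 : H) R,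
          ‖S u₁ - S u₂‖ ≤ C * ‖u₁ - u₂‖) ∧
      ∀ u ∈ Metric.closedBall (0 : H) R, ∀ n : ℕ, n₀ ≤ n →
          ‖S^[n] u‖ ≤ max (a * ‖u‖) r

/-- Condition (B): dissipativity. -/
def CondB (S : H → H) (K : Set H) : Prop :=
  ∃ ρ : ℝ, 0 < ρ ∧ ∃ k₀ : ℝ → ℕ, Monotone k₀ ∧
    ∀ R : ℝ, 0 ≤ R → ∀ k : ℕ, k₀ R ≤ k →
      attain S K (Metric.closedBall 0 R) k ⊆ Metric.closedBall (0 : H) ρ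

/-- Condition (C): squeezing. -/
def CondC (S : H → H) (e : HilbertBasis ℕ ℝ H) : Prop :=
  ∀ R : ℝ, 0 < R → ∃ γ : ℕ → ℝ, (∀ N, 0 < γ N) ∧ Antitone γ ∧
    Tendsto γ atTop (𝓝 0) ∧
    ∀ N : ℕ, ∀ u₁ ∈ Metric.closedBall (0 : H) R, ∀ u₂ ∈ Metric.closedBall (0 : H) R,
      ‖(S u₁ - S u₂) - projB e N (S u₁ - S u₂)‖ ≤ γ N * ‖u₁ - u₂‖

/-- Condition (D): structure of the noise, `η_k = ∑_j b_j ξ_{jk} e_j` with `∑ b_j² < ∞`,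
independent scalar `ξ_{jk}` whose laws have Lipschitz densities `p_j` with `p_j(0) > 0` and
support in `[-1,1]`. -/
def CondD [MeasurableSpace H] {Ω : Type*} [MeasurableSpace Ω] (P : Measure Ω)
    (e : HilbertBasis ℕ ℝ H) (η : ℕ → Ω → H)
    (b : ℕ → ℝ) (ξ : ℕ → ℕ → Ω → ℝ) (p : ℕ → ℝ → ℝ) : Prop :=
  (∀ j, 0 ≤ b j) ∧ Summable (fun j => (b j) ^ 2) ∧
  (∀ k ω, HasSum (fun j => (b j * ξ j k ω) • (e j : H)) (η k ω)) ∧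
  (∀ j k, Measurable (ξ j k)) ∧
  iIndepFun (fun jk : ℕ × ℕ => ξ jk.1 jk.2) P ∧
  (∀ j k, Measure.map (ξ j k) P
      = (volume : Measure ℝ).withDensity fun x => ENNReal.ofReal (p j x)) ∧
  (∀ j, ∃ L : ℝ≥0, LipschitzWith L (p j)) ∧
  (∀ j, 0 < p j 0) ∧
  (∀ j, Function.support (p j) ⊆ Set.Icc (-1 : ℝ) 1)

/-- The trajectory `u_k = S(u_{k-1}) + η_k` of the random dynamical system issued from `u₀`. -/
def traj {Ω : Type*} (S : H → H) (η : ℕ → Ω → H) (u₀ : Ω → H) : ℕ → Ω → H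
  | 0 => u₀
  | k + 1 => fun ω => S (traj S η u₀ k ω) + η (k + 1) ω

/-- The (topological) support of a measure. -/
def msupp {X : Type*} [TopologicalSpace X] [MeasurableSpace X] (μ : Measure X) : Set X :=
  {x | ∀ U ∈ 𝓝 x, 0 < μ U}

/-- The occupation measures `ζ_k = k⁻¹ ∑_{n=0}^{k-1} δ_{x_n}` of a sequence. -/
def occ {X : Type*} [MeasurableSpace X] (x : ℕ → X) (k : ℕ) : ProbabilityMeasure X :=
  if hk : k = 0 then ⟨Measure.dirac (x 0), Measure.dirac.isProbabilityMeasure⟩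
  else
    ⟨(k : ℝ≥0∞)⁻¹ • ∑ n ∈ Finset.range k, Measure.dirac (x n), by
      refine ⟨?_⟩
      simp only [Measure.smul_apply, Measure.finset_sum_apply, measure_univ,
        Finset.sum_const, Finset.card_range, nsmul_eq_mul, mul_one, smul_eq_mul]
      exact ENNReal.inv_mul_cancel (Nat.cast_ne_zero.mpr hk) (ENNReal.natCast_ne_top k)⟩

/-- Large deviation principle for the sequence of events `prob k` (the laws of random
probability measures in `Z`), with rate function `I`. -/
def LDPof {Z : Type*} [TopologicalSpace Z] (prob : ℕ → Set Z → ℝ≥0∞) (I : Z → ℝ≥0∞) : Prop :=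
  (∀ F : Set Z, IsClosed F →
    Filter.limsup (fun k : ℕ => (((k : ℝ)⁻¹ : ℝ) : EReal) * ENNReal.log (prob k F)) atTop
      ≤ -(⨅ σ ∈ F, (I σ : EReal))) ∧
  (∀ G : Set Z, IsOpen G →
    -(⨅ σ ∈ G, (I σ : EReal))
      ≤ Filter.liminf (fun k : ℕ => (((k : ℝ)⁻¹ : ℝ) : EReal) * ENNReal.log (prob k G)) atTop)

/-- A good rate function: lower semicontinuous with compact level sets. -/
def GoodRate {Z : Type*} [TopologicalSpace Z] (I : Z → ℝ≥0∞) : Prop :=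
  LowerSemicontinuous I ∧ ∀ c : ℝ≥0∞, c ≠ ⊤ → IsCompact {σ : Z | I σ ≤ c}

/-- The Feynman–Kac semigroup `𝔓_k^V f(u) = 𝔼_u [f(u_k) exp(∑_{n=1}^k V(u_n))]`. -/
def FK {H : Type} [NormedAddCommGroup H] [InnerProductSpace ℝ H] [CompleteSpace H]
    {Ω : Type} [MeasurableSpace Ω] (P : Measure Ω)
    (S : H → H) (η : ℕ → Ω → H) (V : H → ℝ) (k : ℕ) (f : H → ℝ) (u : H) : ℝ :=
  ∫ ω, f (traj S η (fun _ => u) k ω) *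
    Real.exp (∑ n ∈ Finset.Icc 1 k, V (traj S η (fun _ => u) n ω)) ∂P

/-- Sup-norm over a set `A`. -/
def supOn {H : Type*} (A : Set H) (g : H → ℝ) : ℝ := ⨆ x : A, |g (x : H)|

/-!
The one-step operator `Q g (u) = 𝔼 [g(S u + η) exp V(S u + η)]` satisfies a Lasota–Yorke inequality.
To compare `Q g (u)` with `Q g (u')`, translate the first `N` coordinates of the noise so as to
absorb `𝖯_N (S u - S u')`: since these coordinates have a Lipschitz density, this costs
`C_N ‖g‖_∞ ‖u - u'‖`. What remains of the displacement has size at most `γ_N ‖u - u'‖` and lies in a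
fibre of `𝖯_N`, along which `V` is constant for large `N`; it costs `e^‖V‖ γ_N L ‖u - u'‖`, where
`L` is the Lipschitz constant of `g` along these fibres. As `f` is bounded below by a positive
constant, `f ≤ κ Q f`, hence `‖Qᵏ f‖_∞ ≤ κ ‖Qᵏ⁺¹ f‖_∞` with `κ` independent of `k`. Choosing `N`
with `e^‖V‖ γ_N κ ≤ 1/2`, and using that `f` has fibre constant `0`, the inequality iterates to a
bound on the Lipschitz constant of `Qᵏ f / ‖Qᵏ f‖_∞` that is uniform in `k ≥ 1`.
-/

namespace FeynmanKac

section Metric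

theorem totallyBounded_of_forall_exists_approx {X : Type*} [PseudoMetricSpace X] {s : Set X}
    (h : ∀ ε > 0, ∃ π : X → X, TotallyBounded (π '' s) ∧ ∀ x ∈ s, dist x (π x) < ε) :
    TotallyBounded s := by
  refine Metric.totallyBounded_iff.2 fun ε hε => ?_
  obtain ⟨π, hπ, hdist⟩ := h (ε / 2) (half_pos hε)
  obtain ⟨t, ht, hcover⟩ := Metric.totallyBounded_iff.1 hπ (ε / 2) (half_pos hε)
  refine ⟨t, ht, fun x hx => ?_⟩
  obtain ⟨y, hy, hxy⟩ := Set.mem_iUnion₂.1 (hcover (Set.mem_image_of_mem π hx))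
  refine Set.mem_iUnion₂.2 ⟨y, hy, ?_⟩
  calc dist x y ≤ dist x (π x) + dist (π x) y := dist_triangle _ _ _
    _ < ε / 2 + ε / 2 := add_lt_add (hdist x hx) hxy
    _ = ε := add_halves ε

/-- `g` is Lipschitz on `A` with constant `L` along the fibres of `π`. The constant `0` means that
on `A` the value of `g` depends on `π` only. -/
def FiberLipschitzOn {X Y : Type*} [PseudoMetricSpace X] (L : ℝ) (π : X → Y) (g : X → ℝ)
    (A : Set X) : Prop :=
  ∀ x ∈ A, ∀ y ∈ A, π x = π y → |g x - g y| ≤ L * dist x y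

-- The fixed point of `L ↦ κ (δ L + C)` is at most `2 C κ` once `δ κ ≤ 1 / 2`, so the bound
-- `2 C κ M k` propagates along the recursion.
theorem lipschitzOn_succ_of_fiberLipschitzOn_step {X Y : Type*} [PseudoMetricSpace X]
    {A : Set X} {π : X → Y} {G : ℕ → X → ℝ} {M : ℕ → ℝ} {κ δ C : ℝ}
    (hM : ∀ k, 0 ≤ M k) (hκ : 0 ≤ κ) (hgrowth : ∀ k, M k ≤ κ * M (k + 1))
    (hC : 0 ≤ C) (hδκ : δ * κ ≤ 1 / 2) (hzero : FiberLipschitzOn 0 π (G 0) A)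
    (hstep : ∀ k L, 0 ≤ L → FiberLipschitzOn L π (G k) A →
      ∀ x ∈ A, ∀ y ∈ A, |G (k + 1) x - G (k + 1) y| ≤ (δ * L + C * M k) * dist x y)
    (k : ℕ) : ∀ x ∈ A, ∀ y ∈ A,
      |G (k + 1) x - G (k + 1) y| ≤ 2 * C * κ * M (k + 1) * dist x y := by
  have hbound (k : ℕ) : δ * (2 * C * κ * M k) + C * M k ≤ 2 * C * κ * M (k + 1) := by
    calc δ * (2 * C * κ * M k) + C * M k = (2 * (δ * κ) + 1) * C * M k := by ring
      _ ≤ (2 * (1 / 2) + 1) * C * (κ * M (k + 1)) := by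
        have := hM k
        gcongr
        exact hgrowth k
      _ = 2 * C * κ * M (k + 1) := by ring
  have hpropagate (k : ℕ) (hk : FiberLipschitzOn (2 * C * κ * M k) π (G k) A) :
      ∀ x ∈ A, ∀ y ∈ A, |G (k + 1) x - G (k + 1) y| ≤ 2 * C * κ * M (k + 1) * dist x y := by
    intro x hx y hy
    have := hM k
    exact (hstep k _ (by positivity) hk x hx y hy).trans (by gcongr; exact hbound k)
  have hfiber (k : ℕ) : FiberLipschitzOn (2 * C * κ * M k) π (G k) A := by
    induction k with
    | zero =>
      intro x hx y hy hxy
      have := hM 0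
      exact (hzero x hx y hy hxy).trans (by gcongr; positivity)
    | succ k ih => exact fun x hx y hy _ => hpropagate k ih x hx y hy
  exact hpropagate k (hfiber k)

theorem uniformEquicontinuousOn_of_zero_of_succ {X Y : Type*} [UniformSpace X] [UniformSpace Y]
    {F : ℕ → X → Y} {A : Set X} (hzero : UniformContinuousOn (F 0) A)
    (hsucc : UniformEquicontinuousOn (fun k => F (k + 1)) A) : UniformEquicontinuousOn F A := by
  intro U hU
  filter_upwards [hzero hU, hsucc U hU] with q h0 h1 k
  cases k with
  | zero => exact h0
  | succ k => exact h1 k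

end Metric

section SupNorm

variable {X : Type*} [TopologicalSpace X] {A : Set X}

theorem abs_le_supOn (g : X →ᵇ ℝ) {x : X} (hx : x ∈ A) : |g x| ≤ supOn A g :=
  le_ciSup (f := fun x : A => |g x|)
    ⟨‖g‖, by rintro _ ⟨y, rfl⟩; exact g.norm_coe_le_norm y⟩ ⟨x, hx⟩

theorem supOn_le_mul_supOn {f g : X →ᵇ ℝ} {κ : ℝ} (hne : A.Nonempty) (hκ : 0 ≤ κ)
    (hf : ∀ x ∈ A, 0 ≤ f x) (hfg : ∀ x ∈ A, f x ≤ κ * g x) : supOn A f ≤ κ * supOn A g := by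
  have := hne.to_subtype
  refine ciSup_le fun x => ?_
  rw [abs_of_nonneg (hf x x.2)]
  calc f x ≤ κ * g x := hfg x x.2
    _ ≤ κ * supOn A g := by gcongr; exact (le_abs_self _).trans (abs_le_supOn g x.2)

end SupNorm

section Projection

variable {E : Type} [NormedAddCommGroup E] [InnerProductSpace ℝ E] (e : HilbertBasis ℕ ℝ E)

theorem abs_repr_le_norm (u : E) (j : ℕ) : |e.repr u j| ≤ ‖u‖ := by
  simpa only [e.repr_apply_apply, e.orthonormal.1 j, one_mul] using
    abs_real_inner_le_norm (e j) u

theorem projB_sub (N : ℕ) (u v : E) : projB e N (u - v) = projB e N u - projB e N v := by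
  simp only [projB, map_sub, lp.coeFn_sub, Pi.sub_apply, sub_smul, Finset.sum_sub_distrib]

theorem repr_projB_of_lt {N j : ℕ} (hj : j < N) (u : E) :
    e.repr (projB e N u) j = e.repr u j := by
  rw [e.repr_apply_apply, projB, e.orthonormal.inner_right_sum _ (Finset.mem_range.2 hj)]

theorem projB_eq_projB_iff {N : ℕ} {u v : E} :
    projB e N u = projB e N v ↔ ∀ j < N, e.repr u j = e.repr v j := by
  refine ⟨fun h j hj => ?_, fun h => ?_⟩
  · rw [← repr_projB_of_lt e hj u, h, repr_projB_of_lt e hj v]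
  · exact Finset.sum_congr rfl fun j hj => by rw [h j (Finset.mem_range.1 hj)]

theorem projB_projB (N : ℕ) (u : E) : projB e N (projB e N u) = projB e N u :=
  (projB_eq_projB_iff e).2 fun _ hj => repr_projB_of_lt e hj u

/-- On `A` the function `g` depends on finitely many coordinates only; with continuity this is the
class `𝒱`. -/
def IsCylindricalOn (A : Set E) (g : E → ℝ) : Prop :=
  ∃ N, FiberLipschitzOn 0 (projB e N) g A

variable {e}

theorem isCylindricalOn_of_eq_comp_projB {A : Set E} {g F : E → ℝ} {N : ℕ}
    (h : ∀ u ∈ A, g u = F (projB e N u)) : IsCylindricalOn e A g :=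
  ⟨N, fun x hx y hy hxy => by simp [h x hx, h y hy, hxy]⟩

theorem IsCylindricalOn.eventually {A : Set E} {g : E → ℝ} (hg : IsCylindricalOn e A g) :
    ∀ᶠ N in atTop, FiberLipschitzOn 0 (projB e N) g A := by
  obtain ⟨N₀, hN₀⟩ := hg
  filter_upwards [eventually_ge_atTop N₀] with N hN x hx y hy hxy
  exact hN₀ x hx y hy <| (projB_eq_projB_iff e).2 fun j hj =>
    (projB_eq_projB_iff e).1 hxy j (hj.trans_le hN)

variable (e)

/-- The map `x ↦ ∑_{j < N} b_j x_j e_j`, through which the first `N` noise coordinates act. -/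
def coordEmbedding (b : ℕ → ℝ) (N : ℕ) : (Fin N → ℝ) →L[ℝ] E :=
  ∑ j : Fin N, (b j • ContinuousLinearMap.proj (R := ℝ) (φ := fun _ : Fin N => ℝ) j).smulRight
    (e j)

theorem coordEmbedding_apply (b : ℕ → ℝ) (N : ℕ) (x : Fin N → ℝ) :
    coordEmbedding e b N x = ∑ j : Fin N, (b j * x j) • e j := by
  simp [coordEmbedding]

theorem exists_coordEmbedding_eq_projB {b : ℕ → ℝ} (hb : ∀ j, b j ≠ 0) (N : ℕ) :
    ∃ c : ℝ, 0 ≤ c ∧ ∀ v : E, ∃ a, coordEmbedding e b N a = projB e N v ∧ ‖a‖ ≤ c * ‖v‖ := by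
  have hc : 0 ≤ ∑ j : Fin N, |b j|⁻¹ := Finset.sum_nonneg fun j _ => by positivity
  refine ⟨∑ j : Fin N, |b j|⁻¹, hc, fun v => ⟨fun j => e.repr v j / b j, ?_, ?_⟩⟩
  · rw [coordEmbedding_apply, projB, Finset.sum_range (fun j => e.repr v j • e j)]
    exact Finset.sum_congr rfl fun j _ => by rw [mul_div_cancel₀ _ (hb j)]
  · refine (pi_norm_le_iff_of_nonneg (by positivity)).2 fun j => ?_
    calc ‖e.repr v j / b j‖ = |b j|⁻¹ * |e.repr v j| := by
          rw [Real.norm_eq_abs, abs_div, div_eq_inv_mul]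
      _ ≤ (∑ j : Fin N, |b j|⁻¹) * ‖v‖ :=
        mul_le_mul (Finset.single_le_sum (f := fun j : Fin N => |b j|⁻¹)
          (fun j _ => by positivity) (Finset.mem_univ j)) (abs_repr_le_norm e v j)
          (abs_nonneg _) hc

theorem totallyBounded_projB_image {s : Set E} (hs : Bornology.IsBounded s) (N : ℕ) :
    TotallyBounded (projB e N '' s) := by
  obtain ⟨c, hc, hlift⟩ := exists_coordEmbedding_eq_projB e (b := fun _ => 1)
    (fun _ => one_ne_zero) N
  obtain ⟨R, hR⟩ := hs.exists_norm_le
  refine ((isCompact_closedBall (0 : Fin N → ℝ) (c * R)).image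
    (coordEmbedding e (fun _ => 1) N).continuous).totallyBounded.subset ?_
  rintro _ ⟨v, hv, rfl⟩
  obtain ⟨a, ha, hnorm⟩ := hlift v
  refine ⟨a, ?_, ha⟩
  rw [mem_closedBall_zero_iff]
  exact hnorm.trans (by gcongr; exact hR v hv)

end Projection

section Attainability

theorem add_mem_attainDom {E : Type*} [AddCommGroup E] [TopologicalSpace E] [ContinuousAdd E]
    {S : E → E} {K B : Set E} (hS : Continuous S) {u z : E} (hu : u ∈ attainDom S K B)
    (hz : z ∈ K) : S u + z ∈ attainDom S K B := by
  refine map_mem_closure (f := fun u => S u + z) (by fun_prop) hu fun x hx => ?_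
  obtain ⟨n, hn⟩ := Set.mem_iUnion.1 hx
  exact Set.mem_iUnion.2 ⟨n + 1, Set.add_mem_add (Set.mem_image_of_mem _ hn) hz⟩

theorem isCompact_attain {E : Type*} [AddCommGroup E] [TopologicalSpace E] [ContinuousAdd E]
    {S : E → E} {K B : Set E} (hS : Continuous S) (hK : IsCompact K) (hB : IsCompact B) (n : ℕ) :
    IsCompact (attain S K B n) := by
  induction n with
  | zero => exact hB
  | succ n ih => exact (ih.image hS).add hK

variable {E : Type} [NormedAddCommGroup E] {S : E → E} {K : Set E}

theorem exists_attain_zero_subset_closedBall (hS : Continuous S) (hK : IsCompact K)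
    (hB : CondB S K) : ∃ R : ℝ, 0 < R ∧ ∀ n, attain S K {0} n ⊆ Metric.closedBall 0 R := by
  obtain ⟨ρ, hρ, k₀, -, habsorb⟩ := hB
  have htransient : Bornology.IsBounded (⋃ n ∈ Finset.range (k₀ 0), attain S K {0} n) :=
    (Bornology.isBounded_biUnion_finset _).2 fun n _ =>
      (isCompact_attain hS hK isCompact_singleton n).isBounded
  obtain ⟨R, hR⟩ := htransient.subset_closedBall 0
  refine ⟨max R ρ, lt_max_of_lt_right hρ, fun n => ?_⟩
  rcases lt_or_ge n (k₀ 0) with hn | hn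
  · calc attain S K {0} n ⊆ ⋃ n ∈ Finset.range (k₀ 0), attain S K {0} n :=
          Set.subset_biUnion_of_mem (u := fun n => attain S K {0} n) (Finset.mem_range.2 hn)
      _ ⊆ Metric.closedBall 0 R := hR
      _ ⊆ Metric.closedBall 0 (max R ρ) := Metric.closedBall_subset_closedBall (le_max_left _ _)
  · have := habsorb 0 le_rfl n hn
    rw [Metric.closedBall_zero] at this
    exact this.trans (Metric.closedBall_subset_closedBall (le_max_right _ _))

theorem exists_attainDom_zero_subset_closedBall (hS : Continuous S) (hK : IsCompact K)
    (hB : CondB S K) : ∃ R : ℝ, 0 < R ∧ attainDom S K {0} ⊆ Metric.closedBall 0 R := by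
  obtain ⟨R, hR, hsub⟩ := exists_attain_zero_subset_closedBall hS hK hB
  exact ⟨R, hR, closure_minimal (Set.iUnion_subset hsub) Metric.isClosed_closedBall⟩

variable [InnerProductSpace ℝ E]

/-- The squeezing property on `A`: high modes of `S u - S u'` are controlled by an arbitrarily
small multiple of `u - u'`. -/
def IsSqueezingOn (S : E → E) (e : HilbertBasis ℕ ℝ E) (A : Set E) : Prop :=
  ∀ ε > 0, ∀ᶠ N in atTop, ∀ u ∈ A, ∀ u' ∈ A,
    ‖(S u - S u') - projB e N (S u - S u')‖ ≤ ε * ‖u - u'‖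

variable {e : HilbertBasis ℕ ℝ E} {A B : Set E}

theorem IsSqueezingOn.mono (h : IsSqueezingOn S e B) (hAB : A ⊆ B) : IsSqueezingOn S e A :=
  fun ε hε => (h ε hε).mono fun _ hN u hu u' hu' => hN u (hAB hu) u' (hAB hu')

theorem isSqueezingOn_closedBall_of_condC (hC : CondC S e) {R : ℝ} (hR : 0 < R) :
    IsSqueezingOn S e (Metric.closedBall 0 R) := by
  intro ε hε
  obtain ⟨γ, -, -, hγ, hsqueeze⟩ := hC R hR
  filter_upwards [hγ.eventually_le_const hε] with N hN u hu u' hu'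
  exact (hsqueeze N u hu u' hu').trans (by gcongr)

theorem exists_lipschitzOnWith_closedBall_of_condA (hA : CondA S) {R : ℝ} (hR : 0 < R) :
    ∃ C, LipschitzOnWith C S (Metric.closedBall 0 R) := by
  obtain ⟨C, -, -, -, -, -, -, hlip, -⟩ := hA.2 R (R / 2) (half_pos hR) (half_lt_self hR)
  exact ⟨_, LipschitzOnWith.of_dist_le' (K := C) fun u hu v hv => by
    simpa only [dist_eq_norm] using hlip u hu v hv⟩

theorem totallyBounded_image_of_isSqueezingOn {C : ℝ≥0} (hA : Bornology.IsBounded A)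
    (hlip : LipschitzOnWith C S A) (hsqueeze : IsSqueezingOn S e A) :
    TotallyBounded (S '' A) := by
  rcases A.eq_empty_or_nonempty with rfl | ⟨u₀, hu₀⟩
  · simp
  obtain ⟨R, hR, hdist⟩ : ∃ R > 0, ∀ u ∈ A, ‖u - u₀‖ < R := by
    obtain ⟨R, hR⟩ := hA.subset_ball u₀
    exact ⟨max R 1, by positivity, fun u hu =>
      (mem_ball_iff_norm.1 (hR hu)).trans_le (le_max_left _ _)⟩
  refine totallyBounded_of_forall_exists_approx fun ε hε => ?_
  obtain ⟨N, hN⟩ := (hsqueeze (ε / R) (by positivity)).exists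
  refine ⟨fun v => projB e N (v - S u₀) + S u₀, ?_, ?_⟩
  · have hbdd : Bornology.IsBounded ((· - S u₀) '' (S '' A)) :=
      isBounded_iff_forall_norm_le.2 ⟨C * R, by
        rintro _ ⟨_, ⟨u, hu, rfl⟩, rfl⟩
        exact (hlip.norm_sub_le hu hu₀).trans (by gcongr; exact (hdist u hu).le)⟩
    have := (totallyBounded_projB_image e hbdd N).image
      (uniformContinuous_id.add uniformContinuous_const : UniformContinuous (· + S u₀))
    simpa only [Set.image_image, id_eq] using this
  · rintro _ ⟨u, hu, rfl⟩
    calc dist (S u) (projB e N (S u - S u₀) + S u₀)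
        = ‖(S u - S u₀) - projB e N (S u - S u₀)‖ := by rw [dist_eq_norm]; congr 1; abel
      _ ≤ ε / R * ‖u - u₀‖ := hN u hu u₀ hu₀
      _ < ε / R * R := by gcongr; exact hdist u hu
      _ = ε := div_mul_cancel₀ ε hR.ne'

theorem isCompact_attainDom_zero [CompleteSpace E] (hK : IsCompact K) (hA : CondA S)
    (hB : CondB S K) (hC : CondC S e) : IsCompact (attainDom S K {0}) := by
  obtain ⟨R, hR, hsub⟩ := exists_attain_zero_subset_closedBall hA.1.continuous hK hB
  obtain ⟨C, hlip⟩ := exists_lipschitzOnWith_closedBall_of_condA hA hR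
  have himage : IsCompact (closure (S '' Metric.closedBall 0 R)) :=
    (totallyBounded_image_of_isSqueezingOn Metric.isBounded_closedBall hlip
      (isSqueezingOn_closedBall_of_condC hC hR)).closure.isCompact_of_isClosed isClosed_closure
  have hcover : IsCompact ({0} ∪ (closure (S '' Metric.closedBall 0 R) + K)) :=
    isCompact_singleton.union (himage.add hK)
  refine hcover.of_isClosed_subset isClosed_closure
    (closure_minimal (Set.iUnion_subset fun n => ?_) hcover.isClosed)
  cases n with
  | zero => exact Set.subset_union_left
  | succ n =>
    exact (Set.add_subset_add ((Set.image_mono (hsub n)).trans subset_closure)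
      subset_rfl).trans Set.subset_union_right

theorem exists_lipschitzOnWith_attainDom_zero (hK : IsCompact K) (hA : CondA S)
    (hB : CondB S K) : ∃ C, LipschitzOnWith C S (attainDom S K {0}) := by
  obtain ⟨R, hR, hsub⟩ := exists_attainDom_zero_subset_closedBall hA.1.continuous hK hB
  obtain ⟨C, hlip⟩ := exists_lipschitzOnWith_closedBall_of_condA hA hR
  exact ⟨C, hlip.mono hsub⟩

theorem isSqueezingOn_attainDom_zero (hS : Continuous S) (hK : IsCompact K) (hB : CondB S K)
    (hC : CondC S e) : IsSqueezingOn S e (attainDom S K {0}) := by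
  obtain ⟨R, hR, hsub⟩ := exists_attainDom_zero_subset_closedBall hS hK hB
  exact (isSqueezingOn_closedBall_of_condC hC hR).mono hsub

end Attainability

section Smoothing

theorem abs_mul_sub_mul_le {p q s t δ M : ℝ} (hs : 0 ≤ s) (ht : 0 ≤ t) (hδ : 0 ≤ δ)
    (hp : s ≠ 0 → |p| ≤ M) (hq : t ≠ 0 → |q| ≤ M) (hpq : s ≠ 0 → t ≠ 0 → |p - q| ≤ δ) :
    |p * s - q * t| ≤ δ * s + M * |s - t| := by
  rcases eq_or_ne t 0 with rfl | ht'
  · rcases eq_or_ne s 0 with rfl | hs'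
    · simp
    · rw [mul_zero, sub_zero, sub_zero, abs_mul]
      exact le_add_of_nonneg_of_le (by positivity) (by gcongr; exact hp hs')
  · rcases eq_or_ne s 0 with rfl | hs'
    · rw [mul_zero, mul_zero, zero_sub, zero_sub, zero_add, abs_neg, abs_neg, abs_mul]
      gcongr
      exact hq ht'
    · calc |p * s - q * t| = |(p - q) * s + q * (s - t)| := by congr 1; ring
        _ ≤ |p - q| * s + |q| * |s - t| := by
          simpa only [abs_mul, abs_of_nonneg hs] using abs_add_le ((p - q) * s) (q * (s - t))
        _ ≤ δ * s + M * |s - t| := by gcongr; exacts [hpq hs' ht', hq ht']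

theorem abs_integral_mul_sub_integral_mul_le {X : Type*} [MeasurableSpace X] {Λ : Measure X}
    {τ : X → X} (hτ : MeasurePreserving τ Λ Λ) (hτe : MeasurableEmbedding τ) {ρ F G : X → ℝ}
    {δ M : ℝ} (hδ : 0 ≤ δ) (hρ : Integrable ρ Λ) (hρ0 : ∀ x, 0 ≤ ρ x)
    (hF : Integrable (fun x => F x * ρ x) Λ) (hG : Integrable (fun x => G x * ρ x) Λ)
    (hFM : ∀ᵐ x ∂Λ, ρ x ≠ 0 → |F x| ≤ M) (hGM : ∀ᵐ x ∂Λ, ρ x ≠ 0 → |G x| ≤ M)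
    (hFG : ∀ᵐ x ∂Λ, ρ x ≠ 0 → ρ (τ x) ≠ 0 → |F x - G (τ x)| ≤ δ) :
    |∫ x, F x * ρ x ∂Λ - ∫ x, G x * ρ x ∂Λ|
      ≤ δ * ∫ x, ρ x ∂Λ + M * ∫ x, |ρ x - ρ (τ x)| ∂Λ := by
  have hGτ : Integrable (fun x => G (τ x) * ρ (τ x)) Λ := (hτ.integrable_comp_emb hτe).2 hG
  have hρτ : Integrable (fun x => |ρ x - ρ (τ x)|) Λ :=
    (hρ.sub ((hτ.integrable_comp_emb hτe).2 hρ)).abs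
  have hGMτ : ∀ᵐ x ∂Λ, ρ (τ x) ≠ 0 → |G (τ x)| ≤ M := hτ.quasiMeasurePreserving.ae hGM
  calc |∫ x, F x * ρ x ∂Λ - ∫ x, G x * ρ x ∂Λ|
      = |∫ x, F x * ρ x - G (τ x) * ρ (τ x) ∂Λ| := by
        rw [integral_sub hF hGτ, hτ.integral_comp hτe fun x => G x * ρ x]
    _ ≤ ∫ x, δ * ρ x + M * |ρ x - ρ (τ x)| ∂Λ := by
        rw [← Real.norm_eq_abs]
        refine norm_integral_le_of_norm_le ((hρ.const_mul δ).add (hρτ.const_mul M)) ?_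
        filter_upwards [hFM, hGMτ, hFG] with x h₁ h₂ h₃
        exact abs_mul_sub_mul_le (hρ0 x) (hρ0 _) hδ h₁ h₂ h₃
    _ = δ * ∫ x, ρ x ∂Λ + M * ∫ x, |ρ x - ρ (τ x)| ∂Λ := by
        rw [integral_add (hρ.const_mul δ) (hρτ.const_mul M), integral_const_mul,
          integral_const_mul]

theorem integral_abs_sub_comp_add_right_le {F : Type*} [NormedAddCommGroup F] [MeasurableSpace F]
    [BorelSpace F] {Λ : Measure F}
    [IsFiniteMeasureOnCompacts Λ] [Λ.IsAddRightInvariant] {D : ℝ≥0} {r : F → ℝ}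
    (hlip : LipschitzWith D r) (hsupp : HasCompactSupport r) (a : F) :
    ∫ x, |r x - r (x + a)| ∂Λ ≤ 2 * D * Λ.real (tsupport r) * ‖a‖ := by
  set U : Set F := tsupport r ∪ (· + a) ⁻¹' tsupport r
  have hU : MeasurableSet U := (isClosed_tsupport r).measurableSet.union
    (measurable_add_const a (isClosed_tsupport r).measurableSet)
  have hΛU : Λ U ≤ Λ (tsupport r) + Λ (tsupport r) :=
    (measure_union_le _ _).trans_eq (by rw [measure_preimage_add_right])
  have hfin : Λ (tsupport r) ≠ ∞ := hsupp.measure_lt_top.ne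
  have hΛU_real : Λ.real U ≤ 2 * Λ.real (tsupport r) := by
    rw [two_mul, Measure.real, Measure.real, ← ENNReal.toReal_add hfin hfin]
    exact ENNReal.toReal_mono (ENNReal.add_ne_top.2 ⟨hfin, hfin⟩) hΛU
  have hpointwise (x : F) : |r x - r (x + a)| ≤ U.indicator (fun _ => D * ‖a‖) x := by
    by_cases hx : x ∈ U
    · rw [Set.indicator_of_mem hx]
      simpa [Real.dist_eq, dist_eq_norm] using hlip.dist_le_mul x (x + a)
    · rw [Set.indicator_of_notMem hx, image_eq_zero_of_notMem_tsupport fun h => hx (.inl h),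
        image_eq_zero_of_notMem_tsupport fun h => hx (.inr h), sub_zero, abs_zero]
  calc ∫ x, |r x - r (x + a)| ∂Λ ≤ ∫ x, U.indicator (fun _ => D * ‖a‖) x ∂Λ :=
        integral_mono_of_nonneg (ae_of_all _ fun _ => abs_nonneg _)
          ((integrable_indicator_iff hU).2 (integrableOn_const
            (hΛU.trans_lt (ENNReal.add_lt_top.2 ⟨hfin.lt_top, hfin.lt_top⟩)).ne))
          (ae_of_all _ hpointwise)
    _ = Λ.real U * (D * ‖a‖) := by rw [integral_indicator_const _ hU, smul_eq_mul]
    _ ≤ 2 * Λ.real (tsupport r) * (D * ‖a‖) := by gcongr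
    _ = 2 * D * Λ.real (tsupport r) * ‖a‖ := by ring

variable {F : Type*} [NormedAddCommGroup F] [NormedSpace ℝ F] [MeasureSpace F]
  {E : Type*} [NormedAddCommGroup E] [NormedSpace ℝ E]
  [MeasurableSpace E]

/-- `μ` is the law of `T X + Y`, where `X` and `Y` are independent and `X` has a compactly supported
Lipschitz density. -/
def HasLipschitzDensityAlong (T : F →L[ℝ] E) (μ : Measure E) : Prop :=
  ∃ (r : F → ℝ) (ν : Measure E), (∃ D, LipschitzWith D r) ∧ HasCompactSupport r ∧ (∀ x, 0 ≤ r x) ∧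
    IsProbabilityMeasure ν ∧
    μ = Measure.map (fun x : F × E => T x.1 + x.2)
      ((volume.withDensity fun x => ENNReal.ofReal (r x)).prod ν)

section Density

variable {T : F →L[ℝ] E} {ν : Measure E} [SFinite ν] {r : F → ℝ}
  [SecondCountableTopology E] [BorelSpace E] [BorelSpace F]

theorem integral_map_add_prod_withDensity [SFinite (volume : Measure F)] (hr : Continuous r)
    (hr0 : ∀ x, 0 ≤ r x) {h : E → ℝ} (hh : Measurable h) :
    ∫ z, h z ∂(Measure.map (fun x : F × E => T x.1 + x.2)
        ((volume.withDensity fun x => ENNReal.ofReal (r x)).prod ν)) =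
      ∫ x : F × E, h (T x.1 + x.2) * r x.1 ∂(volume.prod ν) := by
  rw [prod_withDensity_left (by fun_prop),
    integral_map (by fun_prop) hh.aestronglyMeasurable,
    integral_withDensity_eq_integral_toReal_smul (by fun_prop) (ae_of_all _ fun _ => by simp)]
  simp only [ENNReal.toReal_ofReal (hr0 _), smul_eq_mul, mul_comm]

theorem ae_prod_of_ae_map_add_prod_withDensity [SFinite (volume : Measure F)] (hr : Continuous r)
    (hr0 : ∀ x, 0 ≤ r x) {q : E → Prop}
    (hq : ∀ᵐ z ∂(Measure.map (fun x : F × E => T x.1 + x.2)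
        ((volume.withDensity fun x => ENNReal.ofReal (r x)).prod ν)), q z) :
    ∀ᵐ x : F × E ∂(volume.prod ν), r x.1 ≠ 0 → q (T x.1 + x.2) := by
  rw [prod_withDensity_left (by fun_prop)] at hq
  filter_upwards [(ae_withDensity_iff (by fun_prop)).1 (ae_of_ae_map (by fun_prop) hq)] with x hx h
  exact hx (ENNReal.ofReal_pos.2 ((hr0 _).lt_of_ne' h)).ne'

end Density

variable [SecondCountableTopology E] [BorelSpace E] [FiniteDimensional ℝ F] [BorelSpace F]
  [(volume : Measure F).IsAddHaarMeasure]

-- Translating the smooth component by `a` turns `v'` into `v' + T a`, at the price of the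
-- `L¹`-modulus of continuity of its density.
theorem HasLipschitzDensityAlong.exists_abs_integral_sub_le {T : F →L[ℝ] E} {μ : Measure E}
    [IsProbabilityMeasure μ] (hμ : HasLipschitzDensityAlong T μ) :
    ∃ D : ℝ, 0 ≤ D ∧ ∀ (h : E →ᵇ ℝ) (A : Set E) (v v' : E) (a : F) (δ M : ℝ), 0 ≤ δ → 0 ≤ M →
      (∀ᵐ z ∂μ, v + z ∈ A) → (∀ᵐ z ∂μ, v' + z ∈ A) → (∀ x ∈ A, |h x| ≤ M) →
      (∀ x ∈ A, ∀ y ∈ A, x - y = v - v' - T a → |h x - h y| ≤ δ) →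
      |∫ z, h (v + z) ∂μ - ∫ z, h (v' + z) ∂μ| ≤ δ + D * M * ‖a‖ := by
  obtain ⟨r, ν, ⟨D, hlip⟩, hsupp, hr0, hν, rfl⟩ := hμ
  set Λ : Measure (F × E) := volume.prod ν
  have hr : Continuous r := hlip.continuous
  refine ⟨2 * D * volume.real (tsupport r), by positivity,
    fun h A v v' a δ M hδ hM hv hv' hhM hhδ => ?_⟩
  have hτ : MeasurePreserving (Prod.map (· + a) id) Λ Λ :=
    (measurePreserving_add_right volume a).prod (.id ν)
  have hτe : MeasurableEmbedding (Prod.map (· + a) (id : E → E)) :=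
    (measurableEmbedding_addRight a).prodMap .id
  have hρ : Integrable (fun x : F × E => r x.1) Λ :=
    (hr.integrable_of_hasCompactSupport hsupp).comp_fst ν
  have hmass : ∫ x : F × E, r x.1 ∂Λ = 1 := by
    simpa [Λ] using (integral_map_add_prod_withDensity (T := T) (ν := ν) hr hr0
      (measurable_const (a := (1 : ℝ)))).symm
  have hint (w : E) : Integrable (fun x : F × E => h (w + (T x.1 + x.2)) * r x.1) Λ :=
    hρ.bdd_mul (c := ‖h‖) (by fun_prop) (ae_of_all _ fun _ => h.norm_coe_le_norm _)
  have hmem := ae_prod_of_ae_map_add_prod_withDensity hr hr0 hv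
  have hmem' := ae_prod_of_ae_map_add_prod_withDensity hr hr0 hv'
  have hmodulus : ∫ x : F × E, |r x.1 - r (x.1 + a)| ∂Λ
      ≤ 2 * D * volume.real (tsupport r) * ‖a‖ := by
    rw [integral_fun_fst (f := fun x => |r x - r (x + a)|), probReal_univ, one_smul]
    exact integral_abs_sub_comp_add_right_le hlip hsupp a
  have key := abs_integral_mul_sub_integral_mul_le (F := fun x => h (v + (T x.1 + x.2)))
    (G := fun x => h (v' + (T x.1 + x.2))) hτ hτe hδ hρ (fun x => hr0 x.1) (hint v) (hint v')
    (hmem.mono fun x hx hrx => hhM _ (hx hrx)) (hmem'.mono fun x hx hrx => hhM _ (hx hrx)) (by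
      filter_upwards [hmem, hτ.quasiMeasurePreserving.ae hmem'] with x hx hx' hrx hrx'
      refine hhδ _ (hx hrx) _ (hx' hrx') ?_
      simp only [Prod.map_fst, Prod.map_snd, map_add, id_eq]
      abel)
  rw [integral_map_add_prod_withDensity hr hr0 (h := fun z => h (v + z)) (by fun_prop),
    integral_map_add_prod_withDensity hr hr0 (h := fun z => h (v' + z)) (by fun_prop)]
  calc _ ≤ δ * ∫ x, r x.1 ∂Λ + M * ∫ x : F × E, |r x.1 - r (x.1 + a)| ∂Λ := key
    _ ≤ δ * 1 + M * (2 * D * volume.real (tsupport r) * ‖a‖) := by rw [hmass]; gcongr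
    _ = δ + 2 * D * volume.real (tsupport r) * M * ‖a‖ := by ring

end Smoothing

section ProductDensity

theorem pi_withDensity_ofReal {ι : Type*} [Fintype ι] {q : ι → ℝ → ℝ} (hq0 : ∀ j x, 0 ≤ q j x)
    (hq : ∀ j, Integrable (q j)) :
    Measure.pi (fun j => (volume : Measure ℝ).withDensity fun x => ENNReal.ofReal (q j x)) =
      (volume : Measure (ι → ℝ)).withDensity fun x => ENNReal.ofReal (∏ j, q j (x j)) := by
  have hsigma (j : ι) : SigmaFinite ((volume : Measure ℝ).withDensity
      fun x => ENNReal.ofReal (q j x)) := SigmaFinite.withDensity_ofReal _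
  refine Measure.pi_eq fun s hs => ?_
  have hindicator (x : ι → ℝ) :
      (Set.univ.pi s).indicator (fun x => ∏ j, q j (x j)) x = ∏ j, (s j).indicator (q j) (x j) := by
    by_cases hx : x ∈ Set.univ.pi s
    · rw [Set.indicator_of_mem hx]
      exact Finset.prod_congr rfl fun j _ => (Set.indicator_of_mem (hx j trivial) _).symm
    · obtain ⟨j, hj⟩ : ∃ j, x j ∉ s j := by simpa [Set.mem_pi] using hx
      rw [Set.indicator_of_notMem hx,
        Finset.prod_eq_zero (Finset.mem_univ j) (Set.indicator_of_notMem hj _)]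
  have hint : Integrable fun x : ι → ℝ => ∏ j, q j (x j) := Integrable.fintype_prod hq
  rw [withDensity_apply _ (.univ_pi hs), ← ofReal_integral_eq_lintegral_ofReal hint.integrableOn
      (ae_of_all _ fun x => Finset.prod_nonneg fun j _ => hq0 j _),
    ← integral_indicator (.univ_pi hs)]
  simp only [hindicator]
  rw [integral_fintype_prod_volume_eq_prod, ENNReal.ofReal_prod_of_nonneg
    fun j _ => integral_nonneg (Set.indicator_nonneg fun x _ => hq0 j x)]
  refine Finset.prod_congr rfl fun j _ => ?_
  rw [withDensity_apply _ (hs j), integral_indicator (hs j),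
    ofReal_integral_eq_lintegral_ofReal (hq j).integrableOn (ae_of_all _ (hq0 j))]

theorem lipschitzWith_mul_of_bounded {X : Type*} [PseudoMetricSpace X] {f g : X → ℝ}
    {K L B C : ℝ≥0} (hf : LipschitzWith K f) (hg : LipschitzWith L g) (hfB : ∀ x, |f x| ≤ B)
    (hgC : ∀ x, |g x| ≤ C) : LipschitzWith (B * L + C * K) (f * g) := by
  refine LipschitzWith.of_dist_le_mul fun x y => ?_
  calc |f x * g x - f y * g y| = |f x * (g x - g y) + g y * (f x - f y)| := by congr 1; ring
    _ ≤ |f x| * |g x - g y| + |g y| * |f x - f y| := by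
      simpa only [abs_mul] using abs_add_le (f x * (g x - g y)) (g y * (f x - f y))
    _ ≤ B * (L * dist x y) + C * (K * dist x y) := by
      gcongr
      exacts [hfB x, hg.dist_le_mul x y, hgC y, hf.dist_le_mul x y]
    _ = (B * L + C * K : ℝ≥0) * dist x y := by push_cast; ring

theorem exists_lipschitzWith_finset_prod {ι X : Type*} [PseudoMetricSpace X] {s : Finset ι}
    {f : ι → X → ℝ} (hlip : ∀ i ∈ s, ∃ K, LipschitzWith K (f i))
    (hbdd : ∀ i ∈ s, ∃ B : ℝ≥0, ∀ x, |f i x| ≤ B) : ∃ K, LipschitzWith K (∏ i ∈ s, f i) := by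
  refine (Finset.prod_induction f
    (fun g => (∃ K, LipschitzWith K g) ∧ ∃ B : ℝ≥0, ∀ x, |g x| ≤ B) ?_ ?_
    fun i hi => ⟨hlip i hi, hbdd i hi⟩).1
  · rintro g h ⟨⟨K, hg⟩, B, hgB⟩ ⟨⟨L, hh⟩, C, hhC⟩
    refine ⟨⟨_, lipschitzWith_mul_of_bounded hg hh hgB hhC⟩, B * C, fun x => ?_⟩
    rw [Pi.mul_apply, abs_mul, NNReal.coe_mul]
    exact mul_le_mul (hgB x) (hhC x) (abs_nonneg _) B.2
  · exact ⟨⟨0, LipschitzWith.const 1⟩, 1, by simp⟩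

theorem exists_lipschitzWith_prod_apply {ι : Type*} [Fintype ι] {q : ι → ℝ → ℝ}
    (hlip : ∀ j, ∃ K, LipschitzWith K (q j)) (hsupp : ∀ j, HasCompactSupport (q j)) :
    ∃ K, LipschitzWith K fun x : ι → ℝ => ∏ j, q j (x j) := by
  have hfactor : ∃ K, LipschitzWith K (∏ j, fun x : ι → ℝ => q j (x j)) := by
    refine exists_lipschitzWith_finset_prod (fun j _ => ?_) fun j _ => ?_
    · obtain ⟨K, hK⟩ := hlip j
      exact ⟨_, hK.comp (LipschitzWith.eval j)⟩
    · obtain ⟨K, hK⟩ := hlip j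
      obtain ⟨B, hB⟩ := (hsupp j).exists_bound_of_continuous hK.continuous
      exact ⟨B.toNNReal, fun x => (hB (x j)).trans (Real.le_coe_toNNReal B)⟩
  simpa only [Finset.prod_fn] using hfactor

theorem hasCompactSupport_prod_apply {ι : Type*} [Fintype ι] {q : ι → ℝ → ℝ}
    (hsupp : ∀ j, HasCompactSupport (q j)) :
    HasCompactSupport fun x : ι → ℝ => ∏ j, q j (x j) := by
  refine HasCompactSupport.intro (isCompact_univ_pi hsupp) fun x hx => ?_
  obtain ⟨j, hj⟩ : ∃ j, x j ∉ tsupport (q j) := by simpa [Set.mem_pi] using hx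
  exact Finset.prod_eq_zero (Finset.mem_univ j) (image_eq_zero_of_notMem_tsupport hj)

end ProductDensity

section Independence

theorem measurable_iSup_comap {ι Ω : Type*} {β : ι → Type*} [mβ : ∀ i, MeasurableSpace (β i)]
    (X : ∀ i, Ω → β i) {s : Set ι} {i : ι} (hi : i ∈ s) :
    Measurable[⨆ i ∈ s, (mβ i).comap (X i)] (X i) :=
  measurable_iff_comap_le.2 (le_iSup₂_of_le (f := fun i (_ : i ∈ s) => (mβ i).comap (X i))
    i hi le_rfl)

variable {Ω : Type*} [MeasurableSpace Ω] {P : Measure Ω}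

theorem indepFun_of_measurable_iSup_comap {ι : Type*} {β : ι → Type*} {γ δ : Type*}
    [mβ : ∀ i, MeasurableSpace (β i)] [MeasurableSpace γ] [MeasurableSpace δ]
    {X : ∀ i, Ω → β i} (hX : ∀ i, Measurable (X i)) (hindep : iIndepFun X P)
    {s t : Set ι} (hst : Disjoint s t) {Y : Ω → γ} {Z : Ω → δ}
    (hY : Measurable[⨆ i ∈ s, (mβ i).comap (X i)] Y)
    (hZ : Measurable[⨆ i ∈ t, (mβ i).comap (X i)] Z) : IndepFun Y Z P :=
  indep_of_indep_of_le_left (indep_of_indep_of_le_right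
    (indep_iSup_of_disjoint (fun i => (hX i).comap_le) hindep hst) hZ.comap_le) hY.comap_le

theorem iIndepFun_curry {ι : Type*} {κ : ι → Type*} {𝓧 : ∀ i, κ i → Type*}
    [∀ i j, MeasurableSpace (𝓧 i j)] {X : ∀ i j, Ω → 𝓧 i j} (hX : ∀ i j, Measurable (X i j))
    (h : iIndepFun (fun ij : (i : ι) × κ i => X ij.1 ij.2) P) :
    iIndepFun (fun i ω j => X i j ω) P := by
  have := h.isProbabilityMeasure
  have (i : ι) (j : κ i) : IsProbabilityMeasure (P.map (X i j)) :=
    Measure.isProbabilityMeasure_map (hX i j).aemeasurable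
  have hrow (i : ι) : P.map (fun ω j => X i j ω) = Measure.infinitePi fun j => P.map (X i j) :=
    (h.precomp (g := Sigma.mk i) sigma_mk_injective).map_fun_eq_infinitePi_map (hX i)
  rw [iIndepFun_iff_map_fun_eq_infinitePi_map (by fun_prop)]
  simp only [hrow]
  rw [← Measure.infinitePi_map_piCurry fun i j => P.map (X i j),
    ← h.map_fun_eq_infinitePi_map (fun ij => hX ij.1 ij.2),
    Measure.map_map (by fun_prop) (by fun_prop)]
  rfl

end Independence

section RandomSeries

section Synthesis

variable {E : Type*} [NormedAddCommGroup E] [NormedSpace ℝ E] [CompleteSpace E]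
  [MeasurableSpace E] [BorelSpace E]

theorem exists_measurable_eq_of_hasSum (b : ℕ → ℝ) (v : ℕ → E) :
    ∃ Φ : (ℕ → ℝ) → E, Measurable Φ ∧
      ∀ x y, HasSum (fun j => (b j * x j) • v j) y → Φ x = y := by
  refine ⟨fun x => limUnder atTop fun n => ∑ j ∈ Finset.range n, (b j * x j) • v j,
    (StronglyMeasurable.limUnder fun n => ?_).measurable,
    fun x y h => h.tendsto_sum_nat.limUnder_eq⟩
  have hterm (j : ℕ) : Measurable fun x : ℕ → ℝ => b j * x j := by fun_prop
  exact Finset.stronglyMeasurable_fun_sum _ fun j _ =>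
    (hterm j).stronglyMeasurable.smul_const (v j)

variable {Ω : Type*} [MeasurableSpace Ω] {P : Measure Ω} {b : ℕ → ℝ} {v : ℕ → E}

theorem measurable_of_hasSum {X : ℕ → Ω → ℝ} {U : Ω → E} (hX : ∀ j, Measurable (X j))
    (hU : ∀ ω, HasSum (fun j => (b j * X j ω) • v j) (U ω)) : Measurable U := by
  obtain ⟨Φ, hΦ, hsynth⟩ := exists_measurable_eq_of_hasSum b v
  have hUΦ : U = Φ ∘ fun ω j => X j ω := funext fun ω => (hsynth _ _ (hU ω)).symm
  rw [hUΦ]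
  exact hΦ.comp (measurable_pi_lambda _ hX)

theorem map_eq_map_of_hasSum {X Y : ℕ → Ω → ℝ} {U W : Ω → E} (hX : ∀ j, Measurable (X j))
    (hY : ∀ j, Measurable (Y j)) (hX_indep : iIndepFun X P) (hY_indep : iIndepFun Y P)
    (hXY : ∀ j, P.map (X j) = P.map (Y j))
    (hU : ∀ ω, HasSum (fun j => (b j * X j ω) • v j) (U ω))
    (hW : ∀ ω, HasSum (fun j => (b j * Y j ω) • v j) (W ω)) : P.map U = P.map W := by
  obtain ⟨Φ, hΦ, hsynth⟩ := exists_measurable_eq_of_hasSum b v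
  have hUΦ : U = Φ ∘ fun ω j => X j ω := funext fun ω => (hsynth _ _ (hU ω)).symm
  have hWΦ : W = Φ ∘ fun ω j => Y j ω := funext fun ω => (hsynth _ _ (hW ω)).symm
  rw [hUΦ, hWΦ, ← Measure.map_map hΦ (by fun_prop), ← Measure.map_map hΦ (by fun_prop),
    hX_indep.map_fun_eq_infinitePi_map hX, hY_indep.map_fun_eq_infinitePi_map hY]
  simp only [hXY]

theorem iIndepFun_of_hasSum {ξ : ℕ → ℕ → Ω → ℝ} {η : ℕ → Ω → E} (hξ : ∀ j k, Measurable (ξ j k))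
    (hindep : iIndepFun (fun jk : ℕ × ℕ => ξ jk.1 jk.2) P)
    (hη : ∀ k ω, HasSum (fun j => (b j * ξ j k ω) • v j) (η k ω)) : iIndepFun η P := by
  obtain ⟨Φ, hΦ, hsynth⟩ := exists_measurable_eq_of_hasSum b v
  have hrows : iIndepFun (fun k ω j => ξ j k ω) P :=
    iIndepFun_curry (fun k j => hξ j k) <|
      hindep.precomp (g := fun kj : (_ : ℕ) × ℕ => (kj.2, kj.1)) fun x y h => by
        obtain ⟨h₂, h₁⟩ := Prod.ext_iff.1 h
        exact Sigma.ext h₁ (heq_of_eq h₂)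
  have hηΦ : η = fun k => Φ ∘ fun ω j => ξ j k ω :=
    funext₂ fun k ω => (hsynth _ _ (hη k ω)).symm
  rw [hηΦ]
  exact hrows.comp (fun _ => Φ) fun _ => hΦ

theorem indepFun_head_tail_of_hasSum {X : ℕ → Ω → ℝ} {U : Ω → E} (hX : ∀ j, Measurable (X j))
    (hindep : iIndepFun X P) (hU : ∀ ω, HasSum (fun j => (b j * X j ω) • v j) (U ω)) (N : ℕ) :
    IndepFun (fun ω (j : Fin N) => X j ω)
      (fun ω => U ω - ∑ j ∈ Finset.range N, (b j * X j ω) • v j) P := by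
  have hdisj : Disjoint (Set.Iio N) (Set.Ici N) :=
    Set.disjoint_left.2 fun _ hlt hge => (Set.mem_Iio.1 hlt).not_ge hge
  refine indepFun_of_measurable_iSup_comap hX hindep hdisj ?_ ?_
  · exact @measurable_pi_lambda _ _ _ (_) _ _ fun j => measurable_iSup_comap X j.2
  · exact @measurable_of_hasSum _ _ _ _ _ _ _ (_) _ _ (fun j => X (j + N)) _
      (fun j => measurable_iSup_comap X (Nat.le_add_left N j))
      fun ω => (hasSum_nat_add_iff' N).2 (hU ω)

end Synthesis

variable {Ω : Type*} [MeasurableSpace Ω] {P : Measure Ω} {p : ℕ → ℝ → ℝ} {X : ℕ → Ω → ℝ}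

theorem map_head_eq_withDensity (hX : ∀ j, Measurable (X j)) (hindep : iIndepFun X P)
    (hlaw : ∀ j, P.map (X j) = volume.withDensity fun x => ENNReal.ofReal (p j x))
    (hp : ∀ j, Integrable (p j)) (N : ℕ) :
    P.map (fun ω (j : Fin N) => X j ω) =
      volume.withDensity fun x => ENNReal.ofReal (∏ j : Fin N, max (p j (x j)) 0) := by
  have hlaw' (j : ℕ) :
      P.map (X j) = volume.withDensity fun x => ENNReal.ofReal (max (p j x) 0) := by
    simp only [hlaw, ENNReal.ofReal_max, ENNReal.ofReal_zero, zero_le, max_eq_left]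
  have hhead : iIndepFun (fun j : Fin N => X j) P := hindep.precomp Fin.val_injective
  rw [hhead.map_fun_eq_pi_map fun j : Fin N => (hX j).aemeasurable]
  simp only [hlaw']
  exact pi_withDensity_ofReal (q := fun (j : Fin N) x => max (p j x) 0)
    (fun _ _ => le_max_right _ _) fun j => (hp j).pos_part

theorem hasLipschitzDensityAlong_of_hasSum {E : Type} [NormedAddCommGroup E]
    [InnerProductSpace ℝ E] [CompleteSpace E] [SecondCountableTopology E] [MeasurableSpace E]
    [BorelSpace E] {e : HilbertBasis ℕ ℝ E} {b : ℕ → ℝ} {U : Ω → E}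
    (hX : ∀ j, Measurable (X j)) (hindep : iIndepFun X P)
    (hlaw : ∀ j, P.map (X j) = volume.withDensity fun x => ENNReal.ofReal (p j x))
    (hlip : ∀ j, ∃ K, LipschitzWith K (p j)) (hsupp : ∀ j, HasCompactSupport (p j))
    (hU : ∀ ω, HasSum (fun j => (b j * X j ω) • e j) (U ω)) (N : ℕ) :
    HasLipschitzDensityAlong (coordEmbedding e b N) (P.map U) := by
  have := hindep.isProbabilityMeasure
  set tail : Ω → E := fun ω => U ω - ∑ j ∈ Finset.range N, (b j * X j ω) • e j
  have htail : Measurable tail := (measurable_of_hasSum hX hU).sub (by fun_prop)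
  have hhead : Measurable fun ω (j : Fin N) => X j ω := measurable_pi_lambda _ fun j => hX j
  let q : Fin N → ℝ → ℝ := fun j x => max (p j x) 0
  have hq_lip (j : Fin N) : ∃ K, LipschitzWith K (q j) := (hlip j).imp fun K hK => hK.max_const 0
  have hq_supp (j : Fin N) : HasCompactSupport (q j) :=
    (hsupp j).comp_left (g := fun y => max y 0) (max_self 0)
  have hint (j : ℕ) : Integrable (p j) :=
    (hlip j).elim fun _ hK => hK.continuous.integrable_of_hasCompactSupport (hsupp j)
  refine ⟨fun x => ∏ j, q j (x j), P.map tail, exists_lipschitzWith_prod_apply hq_lip hq_supp,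
    hasCompactSupport_prod_apply hq_supp, fun x => Finset.prod_nonneg fun j _ => le_max_right _ _,
    Measure.isProbabilityMeasure_map htail.aemeasurable, ?_⟩
  rw [← map_head_eq_withDensity hX hindep hlaw hint,
    ← (indepFun_head_tail_of_hasSum hX hindep hU N).map_prod_eq_prod_map_map hhead.aemeasurable
      htail.aemeasurable, Measure.map_map (by fun_prop) (hhead.prodMk htail)]
  congr 1
  ext1 ω
  simp only [Function.comp_apply, coordEmbedding_apply, tail,
    Finset.sum_range (fun j => (b j * X j ω) • e j), add_sub_cancel]

end RandomSeries

section Operator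

section Weight

variable {X : Type*} [TopologicalSpace X]

theorem exp_le_exp_norm (V : X →ᵇ ℝ) (x : X) : Real.exp (V x) ≤ Real.exp ‖V‖ :=
  Real.exp_le_exp.2 ((le_abs_self _).trans (V.norm_coe_le_norm x))

theorem exp_neg_norm_le_exp (V : X →ᵇ ℝ) (x : X) : Real.exp (-‖V‖) ≤ Real.exp (V x) :=
  Real.exp_le_exp.2 (neg_le_of_abs_le (V.norm_coe_le_norm x))

/-- The Feynman–Kac weighting `g e^V` of `g` by the potential `V`. -/
def weight (V g : X →ᵇ ℝ) : X →ᵇ ℝ :=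
  .ofNormedAddCommGroup (fun x => g x * Real.exp (V x)) (by fun_prop) (‖g‖ * Real.exp ‖V‖)
    fun x => by
      rw [norm_mul, Real.norm_of_nonneg (Real.exp_pos _).le]
      exact mul_le_mul (g.norm_coe_le_norm x) (exp_le_exp_norm V x) (Real.exp_pos _).le
        (norm_nonneg g)

theorem weight_apply (V g : X →ᵇ ℝ) (x : X) : weight V g x = g x * Real.exp (V x) := rfl

theorem abs_weight_le (V g : X →ᵇ ℝ) {x : X} {M : ℝ} (hM : |g x| ≤ M) :
    |weight V g x| ≤ M * Real.exp ‖V‖ := by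
  rw [weight_apply, abs_mul, Real.abs_exp]
  exact mul_le_mul hM (exp_le_exp_norm V x) (Real.exp_pos _).le ((abs_nonneg _).trans hM)

theorem fiberLipschitzOn_weight {X Y : Type*} [PseudoMetricSpace X] {π : X → Y} {V g : X →ᵇ ℝ}
    {A : Set X} {L : ℝ} (hg : FiberLipschitzOn L π g A) (hV : FiberLipschitzOn 0 π V A) :
    FiberLipschitzOn (Real.exp ‖V‖ * L) π (weight V g) A := by
  intro x hx y hy hxy
  have hVxy : V x = V y := by simpa [sub_eq_zero] using hV x hx y hy hxy
  calc |weight V g x - weight V g y| = Real.exp (V y) * |g x - g y| := by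
        rw [weight_apply, weight_apply, hVxy, ← sub_mul, abs_mul, Real.abs_exp, mul_comm]
    _ ≤ Real.exp ‖V‖ * (L * dist x y) :=
      mul_le_mul (exp_le_exp_norm V y) (hg x hx y hy hxy) (abs_nonneg _) (Real.exp_pos _).le
    _ = Real.exp ‖V‖ * L * dist x y := (mul_assoc _ _ _).symm

end Weight

variable {E : Type*} [NormedAddCommGroup E]
  [SecondCountableTopology E] [MeasurableSpace E] [BorelSpace E]

theorem integrable_comp_const_add (h : E →ᵇ ℝ) (μ : Measure E) [IsFiniteMeasure μ] (v : E) :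
    Integrable (fun z => h (v + z)) μ :=
  .of_bound (by fun_prop) ‖h‖ (ae_of_all _ fun _ => h.norm_coe_le_norm _)

/-- The Feynman–Kac operator `g ↦ 𝔼 [g(u₁) exp V(u₁)]` of the chain `u₁ = S u + η`, where `η` has
law `μ`, acting on bounded continuous functions. -/
def fkStep (S : C(E, E)) (V : E →ᵇ ℝ) (μ : Measure E) [IsProbabilityMeasure μ] (g : E →ᵇ ℝ) :
    E →ᵇ ℝ :=
  .ofNormedAddCommGroup (fun u => ∫ z, weight V g (S u + z) ∂μ)
    (continuous_of_dominated (fun _ => by fun_prop)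
      (fun _ => ae_of_all _ fun _ => (weight V g).norm_coe_le_norm _)
      (integrable_const _) (ae_of_all _ fun _ => by fun_prop))
    ‖weight V g‖ fun u => by
      simpa using norm_integral_le_of_norm_le_const (μ := μ) (f := fun z => weight V g (S u + z))
        (ae_of_all _ fun z => (weight V g).norm_coe_le_norm (S u + z))

variable {S : C(E, E)} {V : E →ᵇ ℝ} {μ : Measure E} [IsProbabilityMeasure μ] {A : Set E}

theorem fkStep_apply (g : E →ᵇ ℝ) (u : E) :
    fkStep S V μ g u = ∫ z, weight V g (S u + z) ∂μ := rfl

theorem fkStep_smul (c : ℝ) (g : E →ᵇ ℝ) : fkStep S V μ (c • g) = c • fkStep S V μ g := by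
  ext u
  simp only [fkStep_apply, weight_apply, coe_smul, smul_eq_mul, mul_assoc, integral_const_mul]

theorem fkStep_mono {g h : E →ᵇ ℝ} {u : E} (hu : ∀ᵐ z ∂μ, S u + z ∈ A)
    (hgh : ∀ x ∈ A, g x ≤ h x) : fkStep S V μ g u ≤ fkStep S V μ h u := by
  refine integral_mono_ae (integrable_comp_const_add _ μ _) (integrable_comp_const_add _ μ _) ?_
  filter_upwards [hu] with z hz
  exact mul_le_mul_of_nonneg_right (hgh _ hz) (Real.exp_pos _).le

theorem mul_exp_neg_norm_le_fkStep {g : E →ᵇ ℝ} {u : E} {m : ℝ} (hu : ∀ᵐ z ∂μ, S u + z ∈ A)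
    (hm : 0 ≤ m) (hg : ∀ x ∈ A, m ≤ g x) : m * Real.exp (-‖V‖) ≤ fkStep S V μ g u := by
  have hweight : ∀ᵐ z ∂μ, m * Real.exp (-‖V‖) ≤ weight V g (S u + z) := by
    filter_upwards [hu] with z hz
    exact mul_le_mul (hg _ hz) (exp_neg_norm_le_exp V _) (Real.exp_pos _).le (hm.trans (hg _ hz))
  simpa [fkStep_apply] using
    integral_mono_ae (integrable_const _) (integrable_comp_const_add _ μ _) hweight

theorem fkStep_iterate_nonneg {f : E →ᵇ ℝ} (hA : ∀ u ∈ A, ∀ᵐ z ∂μ, S u + z ∈ A)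
    (hf : ∀ x ∈ A, 0 ≤ f x) (k : ℕ) : ∀ u ∈ A, 0 ≤ (fkStep S V μ)^[k] f u := by
  induction k with
  | zero => exact hf
  | succ k ih =>
    intro u hu
    rw [Function.iterate_succ_apply']
    simpa using mul_exp_neg_norm_le_fkStep (V := V) (hA u hu) le_rfl ih

theorem fkStep_iterate_le_mul_succ {f : E →ᵇ ℝ} {κ : ℝ} (hA : ∀ u ∈ A, ∀ᵐ z ∂μ, S u + z ∈ A)
    (hf : ∀ x ∈ A, f x ≤ κ * fkStep S V μ f x) (k : ℕ) :
    ∀ u ∈ A, (fkStep S V μ)^[k] f u ≤ κ * (fkStep S V μ)^[k + 1] f u := by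
  induction k with
  | zero => exact hf
  | succ k ih =>
    intro u hu
    calc (fkStep S V μ)^[k + 1] f u = fkStep S V μ ((fkStep S V μ)^[k] f) u := by
          rw [Function.iterate_succ_apply']
      _ ≤ fkStep S V μ (κ • (fkStep S V μ)^[k + 1] f) u := fkStep_mono (hA u hu) ih
      _ = κ * (fkStep S V μ)^[k + 2] f u := by
          rw [fkStep_smul, Function.iterate_succ_apply' _ (k + 1)]
          rfl

theorem exists_le_mul_fkStep {f : E →ᵇ ℝ} (hA : ∀ u ∈ A, ∀ᵐ z ∂μ, S u + z ∈ A)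
    (hcompact : IsCompact A) (hf : ∀ x ∈ A, 0 < f x) :
    ∃ κ : ℝ, 0 ≤ κ ∧ ∀ x ∈ A, f x ≤ κ * fkStep S V μ f x := by
  obtain ⟨m, hm, hmf⟩ := hcompact.exists_forall_le' f.continuous.continuousOn hf
  refine ⟨‖f‖ / m * Real.exp ‖V‖, by positivity, fun x hx => ?_⟩
  calc f x ≤ ‖f‖ := (le_abs_self _).trans (f.norm_coe_le_norm x)
    _ = ‖f‖ / m * Real.exp ‖V‖ * (m * Real.exp (-‖V‖)) := by
      rw [Real.exp_neg]
      field_simp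
    _ ≤ ‖f‖ / m * Real.exp ‖V‖ * fkStep S V μ f x := by
      gcongr
      exact mul_exp_neg_norm_le_fkStep (hA x hx) hm.le hmf

theorem exists_supOn_fkStep_iterate_le_mul_succ {f : E →ᵇ ℝ}
    (hA : ∀ u ∈ A, ∀ᵐ z ∂μ, S u + z ∈ A) (hcompact : IsCompact A) (hne : A.Nonempty)
    (hf : ∀ x ∈ A, 0 < f x) :
    ∃ κ : ℝ, 0 ≤ κ ∧
      ∀ k, supOn A ((fkStep S V μ)^[k] f) ≤ κ * supOn A ((fkStep S V μ)^[k + 1] f) := by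
  obtain ⟨κ, hκ, hle⟩ := exists_le_mul_fkStep (V := V) hA hcompact hf
  exact ⟨κ, hκ, fun k => supOn_le_mul_supOn hne hκ
    (fkStep_iterate_nonneg hA (fun x hx => (hf x hx).le) k) (fkStep_iterate_le_mul_succ hA hle k)⟩

end Operator

section LasotaYorke

variable {E : Type} [NormedAddCommGroup E] [InnerProductSpace ℝ E] [SecondCountableTopology E]
  [MeasurableSpace E] [BorelSpace E] {e : HilbertBasis ℕ ℝ E} {b : ℕ → ℝ} {S : C(E, E)}
  {V f : E →ᵇ ℝ} {μ : Measure E} [IsProbabilityMeasure μ] {A : Set E} {C : ℝ≥0}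

theorem exists_abs_fkStep_sub_le {N : ℕ} {ε : ℝ} (hε : 0 ≤ ε)
    (hμ : HasLipschitzDensityAlong (coordEmbedding e b N) μ) (hb : ∀ j, b j ≠ 0)
    (hA : ∀ u ∈ A, ∀ᵐ z ∂μ, S u + z ∈ A) (hlip : LipschitzOnWith C S A)
    (hsqueeze : ∀ u ∈ A, ∀ u' ∈ A, ‖(S u - S u') - projB e N (S u - S u')‖ ≤ ε * ‖u - u'‖)
    (hV : FiberLipschitzOn 0 (projB e N) V A) :
    ∃ C' : ℝ, 0 ≤ C' ∧ ∀ (g : E →ᵇ ℝ) (L M : ℝ), 0 ≤ L → 0 ≤ M →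
      FiberLipschitzOn L (projB e N) g A → (∀ x ∈ A, |g x| ≤ M) → ∀ u ∈ A, ∀ u' ∈ A,
        |fkStep S V μ g u - fkStep S V μ g u'| ≤
          (Real.exp ‖V‖ * ε * L + C' * M) * dist u u' := by
  obtain ⟨D, hD, hsmooth⟩ := hμ.exists_abs_integral_sub_le
  obtain ⟨c, hc, hlift⟩ := exists_coordEmbedding_eq_projB e hb N
  refine ⟨D * Real.exp ‖V‖ * (c * C), by positivity,
    fun g L M hL hM hgL hgM u hu u' hu' => ?_⟩
  obtain ⟨a, ha, hac⟩ := hlift (S u - S u')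
  have ha' : ‖a‖ ≤ c * (C * dist u u') := hac.trans <| by
    gcongr
    simpa only [dist_eq_norm] using hlip.dist_le_mul u hu u' hu'
  have hfiber : ∀ x ∈ A, ∀ y ∈ A, x - y = S u - S u' - coordEmbedding e b N a →
      |weight V g x - weight V g y| ≤ Real.exp ‖V‖ * L * (ε * dist u u') := by
    intro x hx y hy hxy
    rw [ha] at hxy
    have hproj : projB e N x = projB e N y := by
      rw [← sub_eq_zero, ← projB_sub, hxy, projB_sub, projB_projB, sub_self]
    refine (fiberLipschitzOn_weight hgL hV x hx y hy hproj).trans ?_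
    rw [dist_eq_norm, dist_eq_norm, hxy]
    gcongr
    exact hsqueeze u hu u' hu'
  calc |fkStep S V μ g u - fkStep S V μ g u'|
      ≤ Real.exp ‖V‖ * L * (ε * dist u u') + D * (M * Real.exp ‖V‖) * ‖a‖ :=
        hsmooth (weight V g) A (S u) (S u') a _ _ (by positivity) (by positivity) (hA u hu)
          (hA u' hu') (fun x hx => abs_weight_le V g (hgM x hx)) hfiber
    _ ≤ Real.exp ‖V‖ * L * (ε * dist u u') +
        D * (M * Real.exp ‖V‖) * (c * (C * dist u u')) := by gcongr
    _ = (Real.exp ‖V‖ * ε * L + D * Real.exp ‖V‖ * (c * C) * M) * dist u u' := by ring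

theorem exists_abs_fkStep_iterate_succ_sub_le
    (hμ : ∀ N, HasLipschitzDensityAlong (coordEmbedding e b N) μ) (hb : ∀ j, b j ≠ 0)
    (hA : ∀ u ∈ A, ∀ᵐ z ∂μ, S u + z ∈ A) (hcompact : IsCompact A) (hne : A.Nonempty)
    (hlip : LipschitzOnWith C S A) (hsqueeze : IsSqueezingOn S e A) (hV : IsCylindricalOn e A V)
    (hf : IsCylindricalOn e A f) (hpos : ∀ x ∈ A, 0 < f x) :
    ∃ K : ℝ, 0 ≤ K ∧ ∀ k, ∀ u ∈ A, ∀ u' ∈ A,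
      |(fkStep S V μ)^[k + 1] f u - (fkStep S V μ)^[k + 1] f u'| ≤
        K * supOn A ((fkStep S V μ)^[k + 1] f) * dist u u' := by
  obtain ⟨κ, hκ, hgrowth⟩ :=
    exists_supOn_fkStep_iterate_le_mul_succ (V := V) hA hcompact hne hpos
  obtain ⟨ε, hε, hεκ⟩ : ∃ ε > 0, Real.exp ‖V‖ * ε * κ ≤ 1 / 2 := by
    refine ⟨1 / (2 * Real.exp ‖V‖ * (κ + 1)), by positivity, ?_⟩
    field_simp
    linarith
  obtain ⟨N, hN, hVN, hfN⟩ := ((hsqueeze ε hε).and (hV.eventually.and hf.eventually)).exists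
  obtain ⟨C', hC', hstep⟩ := exists_abs_fkStep_sub_le hε.le (hμ N) hb hA hlip hN hVN
  have hsup (k : ℕ) : 0 ≤ supOn A ((fkStep S V μ)^[k] f) :=
    Real.iSup_nonneg fun _ => abs_nonneg _
  refine ⟨2 * C' * κ, by positivity, lipschitzOn_succ_of_fiberLipschitzOn_step
    (G := fun k => (fkStep S V μ)^[k] f) hsup hκ hgrowth hC' hεκ hfN fun k L hL hfiber => ?_⟩
  simp only [Function.iterate_succ_apply']
  exact hstep _ L _ hL (hsup k) hfiber fun x hx => abs_le_supOn _ hx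

theorem uniformEquicontinuousOn_fkStep_iterate
    (hμ : ∀ N, HasLipschitzDensityAlong (coordEmbedding e b N) μ) (hb : ∀ j, b j ≠ 0)
    (hA : ∀ u ∈ A, ∀ᵐ z ∂μ, S u + z ∈ A) (hcompact : IsCompact A)
    (hlip : LipschitzOnWith C S A) (hsqueeze : IsSqueezingOn S e A) (hV : IsCylindricalOn e A V)
    (hf : IsCylindricalOn e A f) (hpos : ∀ x ∈ A, 0 < f x) :
    UniformEquicontinuousOn
      (fun k u => (supOn A ((fkStep S V μ)^[k] f))⁻¹ * (fkStep S V μ)^[k] f u) A := by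
  rcases A.eq_empty_or_nonempty with rfl | hne
  · exact fun _ _ => by simp
  obtain ⟨K, hK, hbound⟩ :=
    exists_abs_fkStep_iterate_succ_sub_le hμ hb hA hcompact hne hlip hsqueeze hV hf hpos
  refine uniformEquicontinuousOn_of_zero_of_succ
    (hcompact.uniformContinuousOn_of_continuous (by fun_prop))
    (LipschitzOnWith.uniformEquicontinuousOn _ K.toNNReal fun k =>
      LipschitzOnWith.of_dist_le' fun u hu u' hu' => ?_)
  set M := supOn A ((fkStep S V μ)^[k + 1] f)
  have hM : 0 ≤ M := Real.iSup_nonneg fun _ => abs_nonneg _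
  calc |M⁻¹ * (fkStep S V μ)^[k + 1] f u - M⁻¹ * (fkStep S V μ)^[k + 1] f u'|
      = M⁻¹ * |(fkStep S V μ)^[k + 1] f u - (fkStep S V μ)^[k + 1] f u'| := by
        rw [← mul_sub, abs_mul, abs_of_nonneg (inv_nonneg.2 hM)]
    _ ≤ M⁻¹ * (K * M * dist u u') := by gcongr; exact hbound k u hu u' hu'
    _ = M⁻¹ * M * (K * dist u u') := by ring
    _ ≤ 1 * (K * dist u u') := by gcongr; exact inv_mul_le_one
    _ = K * dist u u' := one_mul _

end LasotaYorke

section Markov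

theorem ae_mem_msupp {X : Type*} [TopologicalSpace X] [HereditarilyLindelofSpace X]
    [MeasurableSpace X] (μ : Measure X) : ∀ᵐ x ∂μ, x ∈ msupp μ := by
  have hsupp : μ.support = msupp μ := Set.ext fun x => Measure.mem_support_iff_forall x
  exact hsupp ▸ Measure.support_mem_ae

theorem integral_eq_integral_integral_map_of_indepFun {Ω γ δ : Type*} [MeasurableSpace Ω]
    [MeasurableSpace γ] [MeasurableSpace δ] {P : Measure Ω} [IsProbabilityMeasure P] {Y : Ω → γ}
    {Z : Ω → δ} {ψ : γ × δ → ℝ} (hY : Measurable Y) (hZ : Measurable Z) (hYZ : IndepFun Y Z P)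
    (hψ : Measurable ψ) (hint : Integrable (fun ω => ψ (Y ω, Z ω)) P) :
    ∫ ω, ψ (Y ω, Z ω) ∂P = ∫ ω, ∫ z, ψ (Y ω, z) ∂(P.map Z) ∂P := by
  have hprod := hYZ.map_prod_eq_prod_map_map hY.aemeasurable hZ.aemeasurable
  have := Measure.isProbabilityMeasure_map (μ := P) hZ.aemeasurable
  have hint' : Integrable ψ ((P.map Y).prod (P.map Z)) := by
    rwa [← hprod, integrable_map_measure hψ.aestronglyMeasurable (hY.prodMk hZ).aemeasurable]
  rw [← integral_map (hY.prodMk hZ).aemeasurable hψ.aestronglyMeasurable, hprod,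
    integral_prod _ hint', integral_map hY.aemeasurable
      hψ.stronglyMeasurable.integral_prod_right'.aestronglyMeasurable]

variable {E : Type} [NormedAddCommGroup E] [SecondCountableTopology E] [MeasurableSpace E]
  [BorelSpace E] {Ω : Type}

theorem measurable_traj {m : MeasurableSpace Ω} {S : E → E} (hS : Measurable S) {η : ℕ → Ω → E}
    (u : E) (k : ℕ) (hη : ∀ n ≤ k, Measurable (η n)) : Measurable (traj S η (fun _ => u) k) := by
  induction k with
  | zero => exact measurable_const
  | succ k ih => exact (hS.comp (ih fun n hn => hη n (hn.trans k.le_succ))).add (hη _ le_rfl)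

variable {η : ℕ → Ω → E}

/-- The position at time `k` of the trajectory issued from `u`, paired with its accumulated
Feynman–Kac weight. -/
def weightedTraj (S : E → E) (η : ℕ → Ω → E) (V : E → ℝ) (u : E) (k : ℕ) (ω : Ω) : E × ℝ :=
  (traj S η (fun _ => u) k ω, Real.exp (∑ n ∈ Finset.Icc 1 k, V (traj S η (fun _ => u) n ω)))

theorem abs_weightedTraj_snd_le {E : Type} [NormedAddCommGroup E] (S : E → E) (η : ℕ → Ω → E)
    (V : E →ᵇ ℝ) (u : E) (k : ℕ) (ω : Ω) :
    |(weightedTraj S η V u k ω).2| ≤ Real.exp (∑ _ ∈ Finset.Icc 1 k, ‖V‖) := by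
  rw [weightedTraj, Real.abs_exp]
  gcongr
  exact (le_abs_self _).trans (V.norm_coe_le_norm _)

theorem measurable_weightedTraj {m : MeasurableSpace Ω} {S : E → E} (hS : Measurable S)
    {V : E → ℝ} (hV : Measurable V) (u : E) (k : ℕ) (hη : ∀ n ≤ k, Measurable (η n)) :
    Measurable (weightedTraj S η V u k) := by
  have htraj (n : ℕ) (hn : n ≤ k) : Measurable (traj S η (fun _ => u) n) :=
    measurable_traj hS u n fun i hi => hη i (hi.trans hn)
  exact (htraj k le_rfl).prodMk <| Real.measurable_exp.comp <|
    Finset.measurable_fun_sum _ fun n hn => hV.comp (htraj n (Finset.mem_Icc.1 hn).2)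

theorem indepFun_weightedTraj_succ [MeasurableSpace Ω] {P : Measure Ω} {S : E → E}
    (hS : Measurable S) {V : E → ℝ} (hV : Measurable V) (hη : ∀ k, Measurable (η k))
    (hindep : iIndepFun η P) (u : E) (k : ℕ) :
    IndepFun (weightedTraj S η V u k) (η (k + 1)) P := by
  have hdisj : Disjoint (Set.Iic k) {k + 1} := by simp
  exact indepFun_of_measurable_iSup_comap hη hindep hdisj
    (measurable_weightedTraj hS hV u k fun n hn => measurable_iSup_comap η hn)
    (measurable_iSup_comap η rfl)

end Markov

section Semigroup

variable {E : Type} [NormedAddCommGroup E] [InnerProductSpace ℝ E] [CompleteSpace E]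
  [SecondCountableTopology E] [MeasurableSpace E] [BorelSpace E] {Ω : Type} [MeasurableSpace Ω]
  {P : Measure Ω} [IsProbabilityMeasure P] {η : ℕ → Ω → E} {μ : Measure E}
  [IsProbabilityMeasure μ]

theorem FK_succ (S : C(E, E)) (hη : ∀ k, Measurable (η k)) (hindep : iIndepFun η P)
    (hlaw : ∀ k, P.map (η k) = μ) (V g : E →ᵇ ℝ) (k : ℕ) (u : E) :
    FK P S η V (k + 1) g u = FK P S η V k (fkStep S V μ g) u := by
  have hS : Measurable S := S.continuous.measurable
  have hV : Measurable V := V.continuous.measurable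
  let Y := weightedTraj S η V u k
  let ψ : (E × ℝ) × E → ℝ := fun x => weight V g (S x.1.1 + x.2) * x.1.2
  have hY : Measurable Y := measurable_weightedTraj hS hV u k fun n _ => hη n
  have hψ : Measurable ψ := by fun_prop
  have hint : Integrable (fun ω => ψ (Y ω, η (k + 1) ω)) P := by
    refine .of_bound (hψ.comp (hY.prodMk (hη _))).aestronglyMeasurable
      (‖weight V g‖ * Real.exp (∑ _ ∈ Finset.Icc 1 k, ‖V‖)) (ae_of_all _ fun ω => ?_)
    rw [norm_mul]
    exact mul_le_mul ((weight V g).norm_coe_le_norm _) (abs_weightedTraj_snd_le S η V u k ω)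
      (norm_nonneg _) (norm_nonneg _)
  calc FK P S η V (k + 1) g u = ∫ ω, ψ (Y ω, η (k + 1) ω) ∂P := by
        refine integral_congr_ae (ae_of_all _ fun ω => ?_)
        simp only [ψ, Y, weightedTraj, weight_apply, traj,
          Finset.sum_Icc_succ_top (Nat.le_add_left 1 k), Real.exp_add]
        ring
    _ = ∫ ω, ∫ z, ψ (Y ω, z) ∂μ ∂P := by
        rw [integral_eq_integral_integral_map_of_indepFun hY (hη _)
          (indepFun_weightedTraj_succ hS hV hη hindep u k) hψ hint, hlaw]
    _ = FK P S η V k (fkStep S V μ g) u := by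
        simp only [ψ, Y, integral_mul_const, ← fkStep_apply]
        rfl

theorem FK_eq_fkStep_iterate (S : C(E, E)) (hη : ∀ k, Measurable (η k)) (hindep : iIndepFun η P)
    (hlaw : ∀ k, P.map (η k) = μ) (V g : E →ᵇ ℝ) (k : ℕ) :
    FK P S η V k g = (fkStep S V μ)^[k] g := by
  induction k generalizing g with
  | zero => ext u; simp [FK, traj]
  | succ k ih =>
    rw [Function.iterate_succ_apply, ← ih]
    exact funext fun u => FK_succ S hη hindep hlaw V g k u

theorem uniformEquicontinuousOn_FK {e : HilbertBasis ℕ ℝ E} {b : ℕ → ℝ} {S : E → E} {A : Set E}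
    {C : ℝ≥0} {V f : E →ᵇ ℝ} (hS : Continuous S) (hη : ∀ k, Measurable (η k))
    (hindep : iIndepFun η P) (hlaw : ∀ k, P.map (η k) = μ)
    (hμ : ∀ N, HasLipschitzDensityAlong (coordEmbedding e b N) μ) (hb : ∀ j, b j ≠ 0)
    (hA : ∀ u ∈ A, ∀ᵐ z ∂μ, S u + z ∈ A) (hcompact : IsCompact A) (hlip : LipschitzOnWith C S A)
    (hsqueeze : IsSqueezingOn S e A) (hV : IsCylindricalOn e A V) (hf : IsCylindricalOn e A f)
    (hpos : ∀ x ∈ A, 0 < f x) :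
    UniformEquicontinuousOn (fun k u => (supOn A (FK P S η V k f))⁻¹ * FK P S η V k f u) A := by
  have hFK (k : ℕ) : FK P S η V k f = (fkStep ⟨S, hS⟩ V μ)^[k] f :=
    FK_eq_fkStep_iterate ⟨S, hS⟩ hη hindep hlaw V f k
  simp only [hFK]
  exact uniformEquicontinuousOn_fkStep_iterate hμ hb hA hcompact hlip hsqueeze hV hf hpos

end Semigroup

end FeynmanKac

open FeynmanKac

theorem statement6_general {H : Type} [NormedAddCommGroup H] [InnerProductSpace ℝ H]
    [CompleteSpace H] [SecondCountableTopology H] [MeasurableSpace H] [BorelSpace H] {Ω : Type}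
    [MeasurableSpace Ω] {P : Measure Ω} {S : H → H} (hS : Continuous S) {e : HilbertBasis ℕ ℝ H}
    {η : ℕ → Ω → H} {b : ℕ → ℝ} {ξ : ℕ → ℕ → Ω → ℝ} {p : ℕ → ℝ → ℝ} (hb : ∀ j, b j ≠ 0)
    (hη : ∀ k ω, HasSum (fun j => (b j * ξ j k ω) • e j) (η k ω))
    (hξ : ∀ j k, Measurable (ξ j k)) (hindep : iIndepFun (fun jk : ℕ × ℕ => ξ jk.1 jk.2) P)
    (hlaw : ∀ j k, P.map (ξ j k) = volume.withDensity fun x => ENNReal.ofReal (p j x))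
    (hp_lip : ∀ j, ∃ K, LipschitzWith K (p j)) (hp_supp : ∀ j, HasCompactSupport (p j))
    {A : Set H} (hcompact : IsCompact A)
    (hA : ∀ u ∈ A, ∀ z ∈ msupp (P.map (η 1)), S u + z ∈ A) {C : ℝ≥0}
    (hlip : LipschitzOnWith C S A) (hsqueeze : IsSqueezingOn S e A) {V f : H →ᵇ ℝ}
    (hV : IsCylindricalOn e A V) (hf : IsCylindricalOn e A f) (hpos : ∀ x ∈ A, 0 < f x) :
    UniformEquicontinuousOn (fun k u => (supOn A (FK P S η V k f))⁻¹ * FK P S η V k f u) A := by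
  have := hindep.isProbabilityMeasure
  have hrow (k : ℕ) : iIndepFun (fun j => ξ j k) P := hindep.precomp (Prod.mk_left_injective k)
  have hη_meas (k : ℕ) : Measurable (η k) := measurable_of_hasSum (fun j => hξ j k) (hη k)
  have hη_law (k : ℕ) : P.map (η k) = P.map (η 1) :=
    map_eq_map_of_hasSum (fun j => hξ j k) (fun j => hξ j 1) (hrow k) (hrow 1)
      (fun j => (hlaw j k).trans (hlaw j 1).symm) (hη k) (hη 1)
  have := Measure.isProbabilityMeasure_map (μ := P) (hη_meas 1).aemeasurable
  have hη_density (N : ℕ) : HasLipschitzDensityAlong (coordEmbedding e b N) (P.map (η 1)) :=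
    hasLipschitzDensityAlong_of_hasSum (fun j => hξ j 1) (hrow 1) (fun j => hlaw j 1) hp_lip hp_supp
      (hη 1) N
  exact uniformEquicontinuousOn_FK hS hη_meas (iIndepFun_of_hasSum hξ hindep hη) hη_law hη_density
    hb (fun u hu => (ae_mem_msupp _).mono (hA u hu)) hcompact hlip hsqueeze hV hf hpos

/-- **Theorem 4.1 (uniform Feller property)**: under Conditions (A)–(D) with `b_j ≠ 0`, for
every `V ∈ 𝒱` and every `f ∈ 𝒞 = 𝒱 ∩ C₊(𝒜)`, the sequence of normalised functions
`{‖𝔓_k^V f‖_∞⁻¹ 𝔓_k^V f, k ≥ 0}` is uniformly equicontinuous on `𝒜`. -/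
theorem statement6
    {H : Type} [NormedAddCommGroup H] [InnerProductSpace ℝ H] [CompleteSpace H]
    [SecondCountableTopology H] [MeasurableSpace H] [BorelSpace H]
    {Ω : Type} [MeasurableSpace Ω] (P : Measure Ω) [IsProbabilityMeasure P]
    (S : H → H) (e : HilbertBasis ℕ ℝ H)
    (η : ℕ → Ω → H) (hηmeas : ∀ k, Measurable (η k))
    (b : ℕ → ℝ) (ξ : ℕ → ℕ → Ω → ℝ) (p : ℕ → ℝ → ℝ)
    (K : Set H) (hK : K = msupp (Measure.map (η 1) P)) (hKcomp : IsCompact K)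
    (hA : CondA S) (hB : CondB S K) (hC : CondC S e) (hD : CondD P e η b ξ p)
    (hb : ∀ j, b j ≠ 0)
    -- `V ∈ 𝒱`
    (V : H →ᵇ ℝ)
    (hV : ∃ N : ℕ, ∃ F : H → ℝ, Continuous F ∧
      ∀ u ∈ attainDom S K ({0} : Set H), V u = F (projB e N u))
    -- `f ∈ 𝒞 = 𝒱 ∩ C₊(𝒜)`
    (f : H →ᵇ ℝ)
    (hf𝒱 : ∃ N : ℕ, ∃ F : H → ℝ, Continuous F ∧
      ∀ u ∈ attainDom S K ({0} : Set H), f u = F (projB e N u))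
    (hfpos : ∀ x ∈ attainDom S K ({0} : Set H), 0 < f x) :
    UniformEquicontinuousOn
      (fun (k : ℕ) (u : H) =>
        (supOn (attainDom S K ({0} : Set H)) (FK P S η (⇑V) k (⇑f)))⁻¹ *
          FK P S η (⇑V) k (⇑f) u)
      (attainDom S K ({0} : Set H)) := by
  subst hK
  obtain ⟨-, -, hη, hξ, hindep, hlaw, hp_lip, -, hp_supp⟩ := hD
  have hS : Continuous S := hA.1.continuous
  obtain ⟨C, hlip⟩ := exists_lipschitzOnWith_attainDom_zero hKcomp hA hB
  obtain ⟨_, _, -, hVF⟩ := hV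
  obtain ⟨_, _, -, hfF⟩ := hf𝒱
  exact statement6_general hS hb hη hξ hindep hlaw hp_lip
    (fun j => .of_support_subset_isCompact isCompact_Icc (hp_supp j))
    (isCompact_attainDom_zero hKcomp hA hB hC) (fun u hu z hz => add_mem_attainDom hS hu hz) hlip
    (isSqueezingOn_attainDom_zero hS hKcomp hB hC) (isCylindricalOn_of_eq_comp_projB hVF)
    (isCylindricalOn_of_eq_comp_projB hfF) hfpos
end
end

section
/- Let P(u,Γ) be a generalised Markov kernel on a compact metric space X satisfying the uniform irreducibility property: for any r > 0 there exist an integer m ≥ 1 and p > 0 such that P_m(u, B(û,r)) ≥ p for all u, û ∈ X. If μ ∈ 𝒫(X) and λ > 0 satisfy 𝔓*μ = λμ, then μ(B(û,r)) ≥ λ^{-m} p > 0 for every û ∈ X and r > 0 (with m, p as above), and consequently the support of μ is all of X. -/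
open MeasureTheory Filter Topology
open scoped ENNReal NNReal

noncomputable section

variable {X : Type} [MetricSpace X] [CompactSpace X] [MeasurableSpace X] [BorelSpace X]

/-- The operator `𝔓 f (u) = ∫ f dP(u,·)` associated with a (generalised Markov) kernel. -/
def opP (P : X → FiniteMeasure X) (f : X → ℝ) (u : X) : ℝ :=
  ∫ v, f v ∂(P u : Measure X)

/-- Iterates `𝔓_k = 𝔓^k`. -/
def opIter (P : X → FiniteMeasure X) : ℕ → (X → ℝ) → X → ℝ
  | 0 => fun f => f
  | k + 1 => fun f => opP P (opIter P k f)

/-- Iterated kernels `P_k(u,·)`, `P_0(u,·) = δ_u`, `P_k(u,·) = ∫ P_{k-1}(u,dv) P(v,·)`. -/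
def kIter (P : X → FiniteMeasure X) : ℕ → X → Measure X
  | 0 => fun u => Measure.dirac u
  | k + 1 => fun u => (kIter P k u).bind fun v => (P v : Measure X)

/-- Iterates of the dual operator `𝔓* ν (Γ) = ∫ P(u,Γ) ν(du)`. -/
def dualIter (P : X → FiniteMeasure X) : ℕ → Measure X → Measure X
  | 0 => fun ν => ν
  | k + 1 => fun ν => (dualIter P k ν).bind fun v => (P v : Measure X)

/-- sup-norm of a function on `X`. -/
def supN (g : X → ℝ) : ℝ := ⨆ x, |g x|

/-- A determining family: two finite non-negative Borel measures assigning equal integrals to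
all members coincide. -/
def Determining (C : Set (X → ℝ)) : Prop :=
  ∀ μ ν : Measure X, IsFiniteMeasure μ → IsFiniteMeasure ν →
    (∀ f ∈ C, ∫ x, f x ∂μ = ∫ x, f x ∂ν) → μ = ν

/-- Uniform irreducibility of a generalised Markov kernel. -/
def UnifIrred (P : X → FiniteMeasure X) : Prop :=
  ∀ r : ℝ, 0 < r → ∃ m : ℕ, 1 ≤ m ∧ ∃ p : ℝ, 0 < p ∧
    ∀ u v : X, ENNReal.ofReal p ≤ kIter P m u (Metric.closedBall v r)

/-- Uniform Feller property of a generalised Markov kernel with respect to a class `C`. -/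
def UnifFeller (P : X → FiniteMeasure X) (C : Set (X → ℝ)) : Prop :=
  ∀ f ∈ C, UniformEquicontinuous fun (k : ℕ) (u : X) =>
    (supN (opIter P k f))⁻¹ * opIter P k f u

/-!
Iterating `𝔓*μ = λμ` gives `λ^m μ(B) = ∫ P_m(u, B) μ(du)` for every Borel set `B`, and the
right-hand side is at least `p` as soon as `P_m(·, B) ≥ p`, since `μ` has mass one. The Feller
property makes `u ↦ P(u, ·)` measurable: the indicator of a closed set is a limit of a bounded
sequence of continuous functions, and closed sets form a π-system generating the Borel σ-algebra.
-/

open ProbabilityTheory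

section WeakContinuity

variable {α Ω : Type*} [TopologicalSpace α] [MeasurableSpace α] [OpensMeasurableSpace α]
  [TopologicalSpace Ω] [MeasurableSpace Ω] [HasOuterApproxClosed Ω] {P : α → FiniteMeasure Ω}

lemma measurable_finiteMeasure_apply_of_isClosed [OpensMeasurableSpace Ω] (hP : Continuous P)
    {F : Set Ω} (hF : IsClosed F) : Measurable fun a ↦ (P a : Measure Ω) F := by
  refine measurable_of_tendsto_metrizable
    (f := fun n a ↦ ∫⁻ x, hF.apprSeq n x ∂(P a : Measure Ω)) (fun n ↦ ?_) ?_
  · exact (FiniteMeasure.continuous_iff_forall_continuous_lintegral.1 hP (hF.apprSeq n)).measurable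
  · exact tendsto_pi_nhds.2 fun a ↦ HasOuterApproxClosed.tendsto_lintegral_apprSeq hF (P a)

lemma measurable_finiteMeasure_of_continuous [BorelSpace Ω] (hP : Continuous P) :
    Measurable P := by
  refine Measurable.subtype_mk (Measurable.measure_of_isPiSystem (S := {F | IsClosed F}) ?_
    isPiSystem_isClosed (fun F hF ↦ measurable_finiteMeasure_apply_of_isClosed hP hF)
    (measurable_finiteMeasure_apply_of_isClosed hP isClosed_univ))
  rw [BorelSpace.measurable_eq (α := Ω), borel_eq_generateFrom_isClosed]

end WeakContinuity

section Eigenmeasure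

variable {α β : Type*} {mα : MeasurableSpace α} {mβ : MeasurableSpace β}

lemma mul_measure_univ_le_bind_apply {κ : Kernel α β} {s : Set β} (hs : MeasurableSet s)
    {p : ℝ≥0∞} (hp : ∀ a, p ≤ κ a s) (μ : Measure α) : p * μ Set.univ ≤ μ.bind κ s :=
  calc p * μ Set.univ = ∫⁻ _, p ∂μ := (lintegral_const p).symm
    _ ≤ ∫⁻ a, κ a s ∂μ := lintegral_mono hp
    _ = μ.bind κ s := (Measure.bind_apply hs κ.aemeasurable).symm

lemma bind_pow_eq_pow_smul {κ : Kernel α α} {μ : Measure α} {c : ℝ≥0∞} (hμ : μ.bind κ = c • μ)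
    (m : ℕ) : μ.bind (κ ^ m : Kernel α α) = c ^ m • μ := by
  induction m with
  | zero => rw [pow_zero, pow_zero, one_smul]; exact Measure.id_comp
  | succ k ih =>
    calc μ.bind (κ ^ (k + 1) : Kernel α α) = (μ.bind (κ ^ k : Kernel α α)).bind κ := by
          rw [pow_succ']; exact Measure.comp_assoc.symm
      _ = c ^ (k + 1) • μ := by rw [ih, Measure.bind_smul, hμ, smul_smul, pow_succ]

lemma mul_measure_univ_le_pow_mul_measure {κ : Kernel α α} {μ : Measure α} {c : ℝ≥0∞}
    (hμ : μ.bind κ = c • μ) {m : ℕ} {s : Set α} (hs : MeasurableSet s) {p : ℝ≥0∞}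
    (hp : ∀ a, p ≤ (κ ^ m) a s) : p * μ Set.univ ≤ c ^ m * μ s :=
  calc p * μ Set.univ ≤ μ.bind (κ ^ m : Kernel α α) s := mul_measure_univ_le_bind_apply hs hp μ
    _ = c ^ m * μ s := by rw [bind_pow_eq_pow_smul hμ, Measure.smul_apply, smul_eq_mul]

end Eigenmeasure

section IteratedKernel

/-- A measurable family of finite measures, as a `ProbabilityTheory.Kernel`; for a generalised
Markov kernel `P` this makes the powers of Mathlib's kernel monoid available for `P_k`. -/
def finiteMeasureKernel {α β : Type*} [MeasurableSpace α] [MeasurableSpace β]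
    (P : α → FiniteMeasure β) (hP : Measurable P) : Kernel α β where
  toFun a := P a
  measurable' := hP.subtype_val

variable {Y : Type} [MeasurableSpace Y] {P : Y → FiniteMeasure Y}

lemma kIter_eq_finiteMeasureKernel_pow (hP : Measurable P) (m : ℕ) (u : Y) :
    kIter P m u = (finiteMeasureKernel P hP ^ m) u := by
  induction m with
  | zero => exact (Kernel.id_apply u).symm
  | succ k ih =>
    rw [pow_succ']
    exact (congrArg (·.bind (finiteMeasureKernel P hP)) ih).trans (Kernel.comp_apply _ _ u).symm

lemma inv_pow_mul_le_measure_of_le_kIter (hP : Measurable P) {μ : Measure Y}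
    [IsProbabilityMeasure μ] {c : ℝ≥0∞} (hμ : μ.bind (fun v ↦ (P v : Measure Y)) = c • μ)
    {m : ℕ} {s : Set Y} (hs : MeasurableSet s) {p : ℝ≥0∞} (hp : ∀ u, p ≤ kIter P m u s) :
    (c ^ m)⁻¹ * p ≤ μ s := by
  have hpow : ∀ u, p ≤ (finiteMeasureKernel P hP ^ m) u s := fun u ↦
    kIter_eq_finiteMeasureKernel_pow hP m u ▸ hp u
  have hmul : p ≤ c ^ m * μ s := by
    simpa using mul_measure_univ_le_pow_mul_measure (κ := finiteMeasureKernel P hP) hμ hs hpow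
  rw [mul_comm, ← div_eq_mul_inv]
  exact ENNReal.div_le_of_le_mul' hmul

end IteratedKernel

lemma isOpenPosMeasure_of_measure_closedBall_pos {α : Type*} [PseudoMetricSpace α]
    [MeasurableSpace α] {μ : Measure α}
    (hμ : ∀ x r, 0 < r → 0 < μ (Metric.closedBall x r)) : μ.IsOpenPosMeasure where
  open_pos := by
    rintro U hU ⟨x, hx⟩
    obtain ⟨r, hr, hrU⟩ := Metric.nhds_basis_closedBall.mem_iff.1 (hU.mem_nhds hx)
    exact ((hμ x r hr).trans_le (measure_mono hrU)).ne'

theorem statement9_general {Y : Type} [MetricSpace Y] [MeasurableSpace Y] [OpensMeasurableSpace Y]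
    {P : Y → FiniteMeasure Y} (hP : Measurable P) (hUI : UnifIrred P)
    {μ : Measure Y} [IsProbabilityMeasure μ] {c : ℝ≥0∞} (hc : c ≠ ∞)
    (hμ : μ.bind (fun v ↦ (P v : Measure Y)) = c • μ) :
    (∀ (r : ℝ) (m : ℕ) (p : ℝ), 0 < p →
      (∀ u v : Y, ENNReal.ofReal p ≤ kIter P m u (Metric.closedBall v r)) →
      ∀ v : Y, 0 < (c ^ m)⁻¹ * ENNReal.ofReal p ∧
        (c ^ m)⁻¹ * ENNReal.ofReal p ≤ μ (Metric.closedBall v r)) ∧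
    μ.IsOpenPosMeasure := by
  have hpos (m : ℕ) {p : ℝ} (hp : 0 < p) : 0 < (c ^ m)⁻¹ * ENNReal.ofReal p :=
    ENNReal.mul_pos (ENNReal.inv_ne_zero.2 (ENNReal.pow_ne_top hc)) (ENNReal.ofReal_pos.2 hp).ne'
  have hle {r p : ℝ} {m : ℕ}
      (h : ∀ u v : Y, ENNReal.ofReal p ≤ kIter P m u (Metric.closedBall v r)) (v : Y) :
      (c ^ m)⁻¹ * ENNReal.ofReal p ≤ μ (Metric.closedBall v r) :=
    inv_pow_mul_le_measure_of_le_kIter hP hμ Metric.isClosed_closedBall.measurableSet (h · v)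
  refine ⟨fun r m p hp h v ↦ ⟨hpos m hp, hle h v⟩,
    isOpenPosMeasure_of_measure_closedBall_pos fun v r hr ↦ ?_⟩
  obtain ⟨m, -, p, hp, h⟩ := hUI r hr
  exact (hpos m hp).trans_le (hle h v)

/-- **Full support of eigen-measures** (Step 2 of the proof of Theorem 3.1): if the kernel is
uniformly irreducible and `𝔓*μ = λμ` with `μ ∈ 𝒫(X)`, `λ > 0`, then
`μ(B(û,r)) ≥ λ^{-m} p > 0` for the constants `m, p` of uniform irreducibility, and hence
`supp μ = X`. -/
theorem statement9 (P : X → FiniteMeasure X)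
    (hFeller : Continuous P) (hnz : ∀ u, P u ≠ 0)
    (hUI : UnifIrred P)
    (μ : ProbabilityMeasure X) (lam : ℝ) (hlam : 0 < lam)
    (heig : (μ : Measure X).bind (fun v => (P v : Measure X))
        = ENNReal.ofReal lam • (μ : Measure X)) :
    (∀ r : ℝ, 0 < r → ∀ m : ℕ, ∀ p : ℝ, 1 ≤ m → 0 < p →
      (∀ u v : X, ENNReal.ofReal p ≤ kIter P m u (Metric.closedBall v r)) →
      ∀ v : X,
        0 < (ENNReal.ofReal lam ^ m)⁻¹ * ENNReal.ofReal p ∧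
        (ENNReal.ofReal lam ^ m)⁻¹ * ENNReal.ofReal p
            ≤ (μ : Measure X) (Metric.closedBall v r)) ∧
    ∀ U : Set X, IsOpen U → U.Nonempty → 0 < (μ : Measure X) U := by
  obtain ⟨hball, hopen⟩ := statement9_general (measurable_finiteMeasure_of_continuous hFeller) hUI
    ENNReal.ofReal_ne_top heig
  exact ⟨fun r _ m p _ ↦ hball r m p, fun U hU hne ↦ hU.measure_pos μ hne⟩
end
end

section
/- Let P(u,Γ) be a generalised Markov kernel on a compact metric space X satisfying the uniform Feller property (with determining family 𝒞 ⊆ C₊(X) of non-zero functions containing 𝟏) and the uniform irreducibility property, and suppose μ ∈ 𝒫(X) satisfies 𝔓*μ = μ. Then for every f ∈ 𝒞 there is a constant C_f > 1 such that C_f^{-1} ≤ ‖𝔓_k f‖_∞ ≤ C_f for all k ≥ 1. -/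
open MeasureTheory Filter Topology
open scoped ENNReal NNReal

noncomputable section

variable {X : Type} [MetricSpace X] [CompactSpace X] [MeasurableSpace X] [BorelSpace X]

/-!
Since `μ` is `𝔓*`-invariant, `∫ 𝔓_k f dμ = ∫ f dμ` for every `k`, and this bounds `‖𝔓_k f‖` from
below because `μ` is a probability measure. For the upper bound, equicontinuity makes `𝔓_k f` at
least half of its maximum on a ball around a maximum point, with radius independent of `k`; by
irreducibility the invariant measure `μ` gives every such ball mass at least some `p > 0`, so
`p ‖𝔓_k f‖ / 2 ≤ ∫ 𝔓_k f dμ = ∫ f dμ`.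
-/

lemma integrable_of_continuous {E F : Type*} [TopologicalSpace E] [CompactSpace E]
    [MeasurableSpace E] [OpensMeasurableSpace E] [NormedAddCommGroup F]
    [SecondCountableTopologyEither E F] {g : E → F} (hg : Continuous g) (μ : Measure E)
    [IsFiniteMeasureOnCompacts μ] : Integrable g μ :=
  hg.integrable_of_hasCompactSupport (.of_compactSpace g)

section SupNorm

variable {E : Type} [TopologicalSpace E] [CompactSpace E] {g : E → ℝ}

lemma abs_le_supN (hg : Continuous g) (x : E) : |g x| ≤ supN g :=
  le_ciSup (isCompact_range hg.abs).bddAbove x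

lemma supN_pos (hg : Continuous g) (hg_ne : g ≠ 0) : 0 < supN g := by
  obtain ⟨x, hx⟩ := Function.ne_iff.1 hg_ne
  exact (abs_pos.2 hx).trans_le (abs_le_supN hg x)

lemma exists_apply_eq_supN [Nonempty E] (hg : Continuous g) (hg_nonneg : 0 ≤ g) :
    ∃ u, g u = supN g := by
  obtain ⟨u, -, hu⟩ := isCompact_univ.exists_isMaxOn Set.univ_nonempty hg.continuousOn
  refine ⟨u, le_antisymm ((le_abs_self _).trans (abs_le_supN hg u)) (ciSup_le fun x => ?_)⟩
  rw [abs_of_nonneg (hg_nonneg x)]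
  exact hu (Set.mem_univ x)

lemma integral_le_supN [MeasurableSpace E] [OpensMeasurableSpace E] (hg : Continuous g)
    (μ : Measure E) [IsProbabilityMeasure μ] : ∫ x, g x ∂μ ≤ supN g :=
  calc ∫ x, g x ∂μ ≤ ∫ _, supN g ∂μ :=
        integral_mono (integrable_of_continuous hg μ) (integrable_const _)
          fun x => (le_abs_self _).trans (abs_le_supN hg x)
    _ = supN g := by simp

end SupNorm

section Equicontinuity

variable {E : Type} [PseudoMetricSpace E] [CompactSpace E] [Nonempty E]

lemma exists_forall_mem_closedBall_half_supN_le {g : E → ℝ} (hg : Continuous g)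
    (hg_nonneg : 0 ≤ g) {r : ℝ}
    (hosc : ∀ x y, dist x y ≤ r → dist ((supN g)⁻¹ * g x) ((supN g)⁻¹ * g y) < 1 / 2) :
    ∃ u, ∀ x ∈ Metric.closedBall u r, supN g / 2 ≤ g x := by
  obtain ⟨u, hu⟩ := exists_apply_eq_supN hg hg_nonneg
  refine ⟨u, fun x hx => ?_⟩
  rcases (hu ▸ hg_nonneg u : 0 ≤ supN g).eq_or_lt with hzero | hpos
  · rw [← hzero, zero_div]
    exact hg_nonneg x
  have hclose : |(supN g)⁻¹ * g x - 1| < 1 / 2 := by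
    simpa only [Real.dist_eq, hu, inv_mul_cancel₀ hpos.ne'] using hosc x u hx
  have hratio : 1 / 2 < g x / supN g := by
    have hleft := (abs_lt.1 hclose).1
    rw [inv_mul_eq_div] at hleft
    linarith
  rw [lt_div_iff₀ hpos] at hratio
  linarith

lemma exists_forall_supN_le_mul_integral [MeasurableSpace E] [OpensMeasurableSpace E]
    {μ : Measure E} [IsFiniteMeasure μ]
    (hμ : ∀ r : ℝ, 0 < r → ∃ p : ℝ, 0 < p ∧ ∀ v, p ≤ μ.real (Metric.closedBall v r))
    {ι : Type*} {g : ι → E → ℝ} (hg : ∀ i, Continuous (g i)) (hg_nonneg : ∀ i, 0 ≤ g i)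
    (hequi : UniformEquicontinuous fun i x => (supN (g i))⁻¹ * g i x) :
    ∃ K : ℝ, ∀ i, supN (g i) ≤ K * ∫ x, g i x ∂μ := by
  obtain ⟨δ, hδ, hosc⟩ := Metric.uniformEquicontinuous_iff.1 hequi (1 / 2) (by norm_num)
  obtain ⟨p, hp, hball⟩ := hμ (δ / 2) (half_pos hδ)
  refine ⟨2 / p, fun i => ?_⟩
  obtain ⟨u, hu⟩ := exists_forall_mem_closedBall_half_supN_le (hg i) (hg_nonneg i)
    fun x y hxy => hosc x y (hxy.trans_lt (half_lt_self hδ)) i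
  have hN : 0 ≤ supN (g i) := Real.iSup_nonneg fun x => abs_nonneg (g i x)
  have hmarkov : supN (g i) / 2 * p ≤ ∫ x, g i x ∂μ :=
    calc supN (g i) / 2 * p ≤ supN (g i) / 2 * μ.real {x | supN (g i) / 2 ≤ g i x} := by
          gcongr
          exact (hball u).trans (measureReal_mono hu)
      _ ≤ ∫ x, g i x ∂μ :=
          mul_meas_ge_le_integral_of_nonneg (.of_forall (hg_nonneg i))
            (integrable_of_continuous (hg i) μ) _
  rw [div_mul_eq_mul_div, le_div_iff₀ hp]
  linarith

end Equicontinuity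

section Kernel

open ProbabilityTheory

lemma measurable_toMeasure_of_continuous {Y E : Type*} [TopologicalSpace Y] [MeasurableSpace Y]
    [OpensMeasurableSpace Y] [TopologicalSpace E] [HasOuterApproxClosed E] [MeasurableSpace E]
    [BorelSpace E] {P : Y → FiniteMeasure E} (hP : Continuous P) :
    Measurable fun y => (P y : Measure E) := by
  refine Measurable.measure_of_isPiSystem
    (BorelSpace.measurable_eq.trans borel_eq_generateFrom_isClosed) isPiSystem_isClosed
    (fun F (hF : IsClosed F) => ?_) ?_
  · have hmeas (n : ℕ) : Measurable fun y => ∫⁻ x, hF.apprSeq n x ∂(P y : Measure E) :=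
      ((FiniteMeasure.continuous_lintegral_boundedContinuousFunction _).comp hP).measurable
    exact measurable_of_tendsto_metrizable hmeas
      (tendsto_pi_nhds.2 fun y =>
        HasOuterApproxClosed.tendsto_lintegral_apprSeq hF (P y : Measure E))
  · simp only [← FiniteMeasure.ennreal_mass]
    exact (ENNReal.continuous_coe.comp (FiniteMeasure.continuous_mass.comp hP)).measurable

variable {E : Type} [MeasurableSpace E] {P : E → FiniteMeasure E}

lemma measurable_kIter (hP : Measurable fun v => (P v : Measure E)) (k : ℕ) :
    Measurable (kIter P k) := by
  induction k with
  | zero => exact Measure.measurable_dirac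
  | succ k ih => exact (Measure.measurable_bind' hP).comp ih

lemma bind_kIter_eq_self (hP : Measurable fun v => (P v : Measure E)) {μ : Measure E}
    (hμ : μ.bind (fun v => (P v : Measure E)) = μ) (k : ℕ) : μ.bind (kIter P k) = μ := by
  induction k with
  | zero => exact Measure.bind_dirac
  | succ k ih =>
    calc μ.bind (kIter P (k + 1))
        = (μ.bind (kIter P k)).bind fun v => (P v : Measure E) :=
          (Measure.bind_bind (measurable_kIter hP k).aemeasurable hP.aemeasurable).symm
      _ = μ := by rw [ih, hμ]

lemma integral_opP_eq_integral_bind (hP : Measurable fun v => (P v : Measure E)) {μ : Measure E}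
    {f : E → ℝ} (hf : Integrable f (μ.bind fun v => (P v : Measure E))) :
    ∫ u, opP P f u ∂μ = ∫ v, f v ∂(μ.bind fun u => (P u : Measure E)) := by
  let κ : Kernel E E := ⟨_, hP⟩
  have hbind : (κ ∘ₖ Kernel.const Unit μ) () = μ.bind κ :=
    Measure.comp_eq_comp_const_apply.symm
  have hcomp := Kernel.integral_comp (hbind ▸ hf)
  rw [hbind] at hcomp
  exact hcomp.symm

lemma opIter_nonneg {f : E → ℝ} (hf : 0 ≤ f) (k : ℕ) : 0 ≤ opIter P k f := by
  induction k with
  | zero => exact hf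
  | succ k ih => exact fun u => integral_nonneg ih

variable [TopologicalSpace E] [CompactSpace E] {f : E → ℝ}

lemma continuous_opP [OpensMeasurableSpace E] (hP : Continuous P) (hf : Continuous f) :
    Continuous (opP P f) :=
  (FiniteMeasure.continuous_integral_continuousMap (⟨f, hf⟩ : C(E, ℝ))).comp hP

lemma continuous_opIter [OpensMeasurableSpace E] (hP : Continuous P) (hf : Continuous f) (k : ℕ) :
    Continuous (opIter P k f) := by
  induction k with
  | zero => exact hf
  | succ k ih => exact continuous_opP hP ih

lemma integral_opIter_eq_integral [HasOuterApproxClosed E] [BorelSpace E] {μ : Measure E}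
    [IsFiniteMeasure μ] (hP : Continuous P)
    (hμ : μ.bind (fun v => (P v : Measure E)) = μ) (hf : Continuous f) (k : ℕ) :
    ∫ u, opIter P k f u ∂μ = ∫ u, f u ∂μ := by
  induction k with
  | zero => rfl
  | succ k ih =>
    have hk : Integrable (opIter P k f) (μ.bind fun v => (P v : Measure E)) := by
      rw [hμ]
      exact integrable_of_continuous (continuous_opIter hP hf k) μ
    calc ∫ u, opIter P (k + 1) f u ∂μ
        = ∫ u, opIter P k f u ∂(μ.bind fun v => (P v : Measure E)) :=
          integral_opP_eq_integral_bind (measurable_toMeasure_of_continuous hP) hk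
      _ = ∫ u, f u ∂μ := by rw [hμ, ih]

end Kernel

lemma UnifIrred.exists_forall_le_measureReal_closedBall {E : Type} [MetricSpace E]
    [MeasurableSpace E] [OpensMeasurableSpace E] {P : E → FiniteMeasure E} (hirr : UnifIrred P)
    (hP : Measurable fun v => (P v : Measure E)) {μ : Measure E} [IsProbabilityMeasure μ]
    (hμ : μ.bind (fun v => (P v : Measure E)) = μ) (r : ℝ) (hr : 0 < r) :
    ∃ p : ℝ, 0 < p ∧ ∀ v, p ≤ μ.real (Metric.closedBall v r) := by
  obtain ⟨m, -, p, hp, hball⟩ := hirr r hr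
  refine ⟨p, hp, fun v => (ENNReal.ofReal_le_iff_le_toReal (measure_ne_top _ _)).1 ?_⟩
  calc ENNReal.ofReal p = ∫⁻ _, ENNReal.ofReal p ∂μ := by simp
    _ ≤ ∫⁻ u, kIter P m u (Metric.closedBall v r) ∂μ := lintegral_mono fun u => hball u v
    _ = μ.bind (kIter P m) (Metric.closedBall v r) :=
        (Measure.bind_apply measurableSet_closedBall (measurable_kIter hP m).aemeasurable).symm
    _ = μ (Metric.closedBall v r) := by rw [bind_kIter_eq_self hP hμ]

theorem statement10_general {P : X → FiniteMeasure X} (hP : Continuous P) (hirr : UnifIrred P)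
    {μ : Measure X} [IsProbabilityMeasure μ] (hμ : μ.bind (fun v => (P v : Measure X)) = μ)
    {f : X → ℝ} (hf : Continuous f) (hf_nonneg : 0 ≤ f) (hf_ne : f ≠ 0)
    (hequi : UniformEquicontinuous fun (k : ℕ) (u : X) =>
      (supN (opIter P k f))⁻¹ * opIter P k f u) :
    ∃ Cf : ℝ, 1 < Cf ∧ ∀ k : ℕ, Cf⁻¹ ≤ supN (opIter P k f) ∧ supN (opIter P k f) ≤ Cf := by
  have : Nonempty X := nonempty_of_isProbabilityMeasure μ
  have hint := integral_opIter_eq_integral hP hμ hf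
  have hlower (k : ℕ) : ∫ x, f x ∂μ ≤ supN (opIter P k f) :=
    hint k ▸ integral_le_supN (continuous_opIter hP hf k) μ
  obtain ⟨K, hK⟩ := exists_forall_supN_le_mul_integral
    (hirr.exists_forall_le_measureReal_closedBall (measurable_toMeasure_of_continuous hP) hμ)
    (continuous_opIter hP hf) (opIter_nonneg hf_nonneg) hequi
  have hupper (k : ℕ) : supN (opIter P k f) ≤ K * ∫ x, f x ∂μ := hint k ▸ hK k
  have hpos : 0 < ∫ x, f x ∂μ := (integral_nonneg hf_nonneg).lt_of_ne' fun hzero =>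
    (supN_pos hf hf_ne).not_ge (by simpa only [hzero, mul_zero, opIter] using hupper 0)
  refine ⟨max 2 (max (∫ x, f x ∂μ)⁻¹ (K * ∫ x, f x ∂μ)), lt_max_of_lt_left one_lt_two,
    fun k => ⟨?_, (hupper k).trans ((le_max_right _ _).trans (le_max_right _ _))⟩⟩
  exact (inv_le_of_inv_le₀ hpos ((le_max_left _ _).trans (le_max_right _ _))).trans (hlower k)

/-- **Two-sided bounds on `‖𝔓_k f‖`** (Step 2 of the proof of Theorem 3.1): under the uniform
Feller and uniform irreducibility properties, if `𝔓*μ = μ` for some `μ ∈ 𝒫(X)`, then for every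
`f` in the determining class there is `C_f > 1` with `C_f⁻¹ ≤ ‖𝔓_k f‖_∞ ≤ C_f` for all
`k ≥ 1`. -/
theorem statement10 (P : X → FiniteMeasure X)
    (hFeller : Continuous P) (hnz : ∀ u, P u ≠ 0)
    (C : Set (X → ℝ))
    (hCpos : ∀ f ∈ C, Continuous f ∧ ∀ x, 0 < f x)
    (hone : (fun _ : X => (1 : ℝ)) ∈ C)
    (hdet : Determining C)
    (hUF : UnifFeller P C)
    (hUI : UnifIrred P)
    (μ : ProbabilityMeasure X)
    (hstat : (μ : Measure X).bind (fun v => (P v : Measure X)) = (μ : Measure X)) :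
    ∀ f ∈ C, ∃ Cf : ℝ, 1 < Cf ∧
      ∀ k : ℕ, 1 ≤ k → Cf⁻¹ ≤ supN (opIter P k f) ∧ supN (opIter P k f) ≤ Cf := by
  intro f hf
  obtain ⟨hf_cont, hf_pos⟩ := hCpos f hf
  obtain ⟨x⟩ := μ.nonempty
  have hf_ne : f ≠ 0 := fun h => (hf_pos x).ne' (congrFun h x)
  obtain ⟨Cf, hCf, hbounds⟩ := statement10_general hFeller hUI hstat hf_cont
    (fun x => (hf_pos x).le) hf_ne (hUF f hf)
  exact ⟨Cf, hCf, fun k _ => hbounds k⟩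
end
end

section
/- Let P(u,Γ) be a generalised Markov kernel on a compact metric space X satisfying the uniform Feller property (with determining family 𝒞 ⊆ C₊(X) of non-zero functions containing 𝟏) and the uniform irreducibility property, and suppose μ ∈ 𝒫(X) satisfies 𝔓*μ = μ. Then there exists a function h ∈ C(X) with h(u) > 0 for every u ∈ X, 𝔓h = h, and ⟨h,μ⟩ = 1; moreover h can be obtained as a uniform limit point of the Cesàro averages k⁻¹ Σ_{l=0}^{k−1} 𝔓_l f for any fixed f ∈ 𝒞, suitably normalized. -/
open MeasureTheory Filter Topology
open scoped ENNReal NNReal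

noncomputable section

variable {X : Type} [MetricSpace X] [CompactSpace X] [MeasurableSpace X] [BorelSpace X]

/-!
Choose `δ` so that the normalised iterates `𝔓_k f / ‖𝔓_k f‖` oscillate by less than `1/2` at scale
`δ`. Then `𝔓_k f ≥ ‖𝔓_k f‖ / 2` on a ball of radius `δ / 2`, irreducibility gives
`𝔓_{k+m} f ≥ p ‖𝔓_k f‖ / 2` everywhere, and integrating against the stationary `μ` yields
`‖𝔓_k f‖ ≤ 2 ⟨f, μ⟩ / p`. The orbit of `f` is thus bounded and equicontinuous, so its closed convex
hull is compact; the Cesàro averages lie in it, and their limit points are fixed by `𝔓`. Being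
non-negative and having integral `⟨f, μ⟩` against `μ` pass to the hull. Irreducibility makes a
non-zero non-negative fixed point positive and unique up to scaling, which is why a single `h`
serves every `f`.
-/

section ErgodicAverages

theorem birkhoffAverage_mem_convexHull {α E : Type*} [AddCommGroup E] [Module ℝ E]
    (T : α → α) (g : α → E) (x : α) {n : ℕ} (hn : n ≠ 0) :
    birkhoffAverage ℝ T g n x ∈ convexHull ℝ (Set.range fun k => g (T^[k] x)) := by
  have hmem := (convex_convexHull ℝ (Set.range fun k => g (T^[k] x))).sum_mem
    (t := Finset.range n) (w := fun _ => (n : ℝ)⁻¹) (fun _ _ => by positivity)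
    (by simp [hn]) (fun k _ => subset_convexHull ℝ _ ⟨k, rfl⟩)
  rwa [← Finset.smul_sum] at hmem

theorem map_birkhoffAverage_id {E : Type*} [AddCommGroup E] [Module ℝ E] (T : E →ₗ[ℝ] E)
    (n : ℕ) (x : E) : T (birkhoffAverage ℝ T id n x) = birkhoffAverage ℝ T id n (T x) := by
  simp only [birkhoffAverage, birkhoffSum, map_smul, map_sum, id_eq, ← Function.iterate_succ_apply,
    Function.iterate_succ_apply']

theorem mapsTo_closedConvexHull {E F : Type*} [AddCommGroup E] [Module ℝ E]
    [TopologicalSpace E] [AddCommGroup F] [Module ℝ F] [TopologicalSpace F] (L : E →L[ℝ] F)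
    {s : Set E} {t : Set F} (hconvex : Convex ℝ t) (hclosed : IsClosed t)
    (hst : Set.MapsTo L s t) : Set.MapsTo L (closedConvexHull ℝ s) t :=
  closedConvexHull_min hst (hconvex.linear_preimage L.toLinearMap) (hclosed.preimage L.continuous)

variable {E : Type*} [NormedAddCommGroup E] [NormedSpace ℝ E]

theorem isFixedPt_of_tendsto_birkhoffAverage (T : E →L[ℝ] E) {x h : E}
    (hx : Bornology.IsBounded (Set.range fun k => T^[k] x)) {φ : ℕ → ℕ}
    (hφ : Tendsto φ atTop atTop)
    (hlim : Tendsto (fun j => birkhoffAverage ℝ T id (φ j) x) atTop (𝓝 h)) :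
    Function.IsFixedPt T h := by
  have hdiff := (tendsto_birkhoffAverage_apply_sub_birkhoffAverage ℝ (g := id) hx).comp hφ
  have hTlim : Tendsto (fun j => birkhoffAverage ℝ T id (φ j) (T x)) atTop (𝓝 (T h)) :=
    ((T.continuous.tendsto h).comp hlim).congr fun j => map_birkhoffAverage_id T.toLinearMap (φ j) x
  exact sub_eq_zero.1 (tendsto_nhds_unique (hTlim.sub hlim) hdiff)

theorem exists_isFixedPt_tendsto_birkhoffAverage [CompleteSpace E] (T : E →L[ℝ] E) {x : E}
    (hx : TotallyBounded (Set.range fun k => T^[k] x)) :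
    ∃ h ∈ closedConvexHull ℝ (Set.range fun k => T^[k] x), Function.IsFixedPt T h ∧
      ∃ φ : ℕ → ℕ, StrictMono φ ∧ (∀ j, 1 ≤ φ j) ∧
        Tendsto (fun j => birkhoffAverage ℝ T id (φ j) x) atTop (𝓝 h) := by
  have hcompact : IsCompact (closedConvexHull ℝ (Set.range fun k => T^[k] x)) := by
    rw [closedConvexHull_eq_closure_convexHull]
    exact hx.convexHull.closure.isCompact_of_isClosed isClosed_closure
  obtain ⟨h, hh, ψ, hψ, hlim⟩ := hcompact.tendsto_subseq fun n =>
    convexHull_subset_closedConvexHull (birkhoffAverage_mem_convexHull T id x n.succ_ne_zero)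
  have hφ : StrictMono fun j => ψ j + 1 := hψ.add_const 1
  exact ⟨h, hh, isFixedPt_of_tendsto_birkhoffAverage T hx.isBounded hφ.tendsto_atTop hlim,
    _, hφ, fun j => Nat.le_add_left 1 _, hlim⟩

end ErgodicAverages

section EquicontinuousFamilies

theorem norm_smul_inv_norm_smul {E : Type*} [NormedAddCommGroup E] [NormedSpace ℝ E] (x : E) :
    ‖x‖ • ‖x‖⁻¹ • x = x := by
  rcases eq_or_ne x 0 with rfl | hx
  · simp
  · exact smul_inv_smul₀ (norm_ne_zero_iff.2 hx) x

section Topological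

variable {Y : Type*} [TopologicalSpace Y] [CompactSpace Y]

theorem totallyBounded_range_of_equicontinuous {ι E : Type*} [NormedAddCommGroup E]
    [ProperSpace E] {F : ι → C(Y, E)} (hbdd : Bornology.IsBounded (Set.range F))
    (hF : Equicontinuous fun i => ⇑(F i)) : TotallyBounded (Set.range F) := by
  obtain ⟨M, hM⟩ := hbdd.exists_norm_le
  let e := ContinuousMap.isometryEquivBoundedOfCompact Y E
  rw [← totallyBounded_image_iff e.isometry.isUniformInducing]
  refine (BoundedContinuousFunction.arzela_ascoli (Metric.closedBall 0 M)
    (isCompact_closedBall 0 M) _ ?_ ?_).totallyBounded.subset subset_closure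
  · rintro _ x ⟨f, hf, rfl⟩
    exact mem_closedBall_zero_iff.2 ((f.norm_coe_le_norm x).trans (hM f hf))
  · intro x U hU
    filter_upwards [hF x U hU] with y hy
    rintro ⟨_, _, ⟨i, rfl⟩, rfl⟩
    exact hy i

theorem exists_norm_eq_apply_of_nonneg [Nonempty Y] {g : C(Y, ℝ)} (hg : 0 ≤ g) :
    ∃ x, ‖g‖ = g x := by
  obtain ⟨x, hx⟩ := g.continuous.exists_forall_ge' (x₀ := Classical.arbitrary Y) (by simp)
  refine ⟨x, le_antisymm ((ContinuousMap.norm_le _ (hg x)).2 fun y => ?_)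
    ((le_abs_self _).trans (g.norm_coe_le_norm x))⟩
  exact (Real.norm_of_nonneg (hg y)).trans_le (hx y)

end Topological

variable {Y : Type*} [PseudoMetricSpace Y] [CompactSpace Y]

theorem uniformEquicontinuous_of_normalized {ι : Type*} {F : ι → C(Y, ℝ)}
    (hbdd : Bornology.IsBounded (Set.range F))
    (hF : UniformEquicontinuous fun i => ⇑(‖F i‖⁻¹ • F i)) :
    UniformEquicontinuous fun i => ⇑(F i) := by
  obtain ⟨M, hM, hbound⟩ := hbdd.exists_pos_norm_le
  rw [Metric.uniformEquicontinuous_iff] at hF ⊢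
  intro ε hε
  obtain ⟨δ, hδ, hosc⟩ := hF (ε / M) (by positivity)
  refine ⟨δ, hδ, fun x y hxy i => ?_⟩
  calc dist (F i x) (F i y)
      = dist ((‖F i‖ • ‖F i‖⁻¹ • F i) x) ((‖F i‖ • ‖F i‖⁻¹ • F i) y) := by
        rw [norm_smul_inv_norm_smul]
    _ = ‖F i‖ * dist ((‖F i‖⁻¹ • F i) x) ((‖F i‖⁻¹ • F i) y) := by
        rw [ContinuousMap.smul_apply _ (‖F i‖⁻¹ • F i),
          ContinuousMap.smul_apply _ (‖F i‖⁻¹ • F i), dist_smul₀, norm_norm]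
    _ ≤ M * dist ((‖F i‖⁻¹ • F i) x) ((‖F i‖⁻¹ • F i) y) := by
        gcongr
        exact hbound _ ⟨i, rfl⟩
    _ < M * (ε / M) := by
        gcongr
        exact hosc x y hxy i
    _ = ε := mul_div_cancel₀ ε hM.ne'

theorem exists_forall_dist_lt_half_norm_le [Nonempty Y] {g : C(Y, ℝ)} (hg : 0 ≤ g) {δ : ℝ}
    (hosc : ∀ x y, dist x y < δ → dist ((‖g‖⁻¹ • g) x) ((‖g‖⁻¹ • g) y) < 1 / 2) :
    ∃ x, ∀ y, dist y x < δ → ‖g‖ / 2 ≤ g y := by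
  obtain ⟨x, hx⟩ := exists_norm_eq_apply_of_nonneg hg
  refine ⟨x, fun y hy => ?_⟩
  have hnear : (‖g‖⁻¹ • g) x - 1 / 2 ≤ (‖g‖⁻¹ • g) y := by
    linarith [(abs_lt.1 (hosc y x hy)).1]
  calc ‖g‖ / 2 = (‖g‖ • ‖g‖⁻¹ • g) x - ‖g‖ / 2 := by rw [norm_smul_inv_norm_smul, ← hx]; ring
    _ = ‖g‖ * ((‖g‖⁻¹ • g) x - 1 / 2) := by
        rw [ContinuousMap.smul_apply _ (‖g‖⁻¹ • g), smul_eq_mul]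
        ring
    _ ≤ ‖g‖ * (‖g‖⁻¹ • g) y := by gcongr
    _ = (‖g‖ • ‖g‖⁻¹ • g) y := rfl
    _ = g y := by rw [norm_smul_inv_norm_smul]

end EquicontinuousFamilies

section KernelMeasurability

variable {Y Z : Type*} [TopologicalSpace Y] [MeasurableSpace Y] [OpensMeasurableSpace Y]
  [TopologicalSpace Z] [MeasurableSpace Z] [BorelSpace Z] [HasOuterApproxClosed Z]

theorem measurable_toMeasure_of_continuous_s11 {P : Y → FiniteMeasure Z} (hP : Continuous P) :
    Measurable fun u => (P u : Measure Z) := by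
  have measurable_closed : ∀ s : Set Z, IsClosed s → Measurable fun u => (P u : Measure Z) s := by
    intro s hs
    refine measurable_of_tendsto_metrizable
      (f := fun n u => ∫⁻ x, (hs.apprSeq n x : ℝ≥0∞) ∂(P u : Measure Z)) (fun n => ?_) ?_
    · exact ((FiniteMeasure.continuous_lintegral_boundedContinuousFunction
        (hs.apprSeq n)).comp hP).measurable
    · exact tendsto_pi_nhds.2 fun u =>
        HasOuterApproxClosed.tendsto_lintegral_apprSeq hs (P u : Measure Z)
  exact Measurable.measure_of_isPiSystem
    (BorelSpace.measurable_eq.trans borel_eq_generateFrom_isClosed) isPiSystem_isClosed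
    measurable_closed (measurable_closed _ isClosed_univ)

/-- A weakly continuous family of finite measures, as a measurable kernel. -/
def fellerKernel (P : C(Y, FiniteMeasure Z)) : ProbabilityTheory.Kernel Y Z :=
  ⟨fun u => P u, measurable_toMeasure_of_continuous_s11 P.continuous⟩

instance isFiniteKernel_fellerKernel [CompactSpace Y] (P : C(Y, FiniteMeasure Z)) :
    ProbabilityTheory.IsFiniteKernel (fellerKernel P) := by
  obtain ⟨M, hM⟩ := (isCompact_range (FiniteMeasure.continuous_mass.comp P.continuous)).bddAbove
  refine ⟨M, ENNReal.coe_lt_top, fun u => ?_⟩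
  change (P u : Measure Z) Set.univ ≤ M
  rw [← FiniteMeasure.ennreal_mass]
  exact ENNReal.coe_le_coe.2 (hM ⟨u, rfl⟩)

end KernelMeasurability

section IntegralFunctional

variable {Y : Type*} [TopologicalSpace Y] [CompactSpace Y] [MeasurableSpace Y]
  [OpensMeasurableSpace Y]

theorem integrable_continuousMap (ν : Measure Y) [IsFiniteMeasure ν] (g : C(Y, ℝ)) :
    Integrable g ν :=
  (BoundedContinuousFunction.mkOfCompact g).integrable ν

/-- The bounded linear functional `g ↦ ⟨g, ν⟩` on `C(Y, ℝ)`. -/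
def integralFunctional (ν : Measure Y) [IsFiniteMeasure ν] : C(Y, ℝ) →L[ℝ] ℝ :=
  LinearMap.mkContinuous
    { toFun := fun g => ∫ x, g x ∂ν
      map_add' := fun f g =>
        integral_add (integrable_continuousMap ν f) (integrable_continuousMap ν g)
      map_smul' := fun c g => integral_const_mul c g }
    (ν.real Set.univ) fun g => by
      rw [mul_comm]
      exact norm_integral_le_of_norm_le_const (.of_forall g.norm_coe_le_norm)

theorem integralFunctional_apply (ν : Measure Y) [IsFiniteMeasure ν] (g : C(Y, ℝ)) :
    integralFunctional ν g = ∫ x, g x ∂ν :=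
  rfl

theorem norm_integralFunctional_le (ν : Measure Y) [IsFiniteMeasure ν] :
    ‖integralFunctional ν‖ ≤ ν.real Set.univ :=
  LinearMap.mkContinuous_norm_le _ measureReal_nonneg _

theorem le_integralFunctional_of_forall_le (ν : Measure Y) [IsProbabilityMeasure ν] {a : ℝ}
    {g : C(Y, ℝ)} (hg : ∀ x, a ≤ g x) : a ≤ integralFunctional ν g := by
  rw [integralFunctional_apply]
  simpa using integral_mono (integrable_const a) (integrable_continuousMap ν g) hg

theorem mul_measureReal_le_integralFunctional (ν : Measure Y) [IsFiniteMeasure ν] {s : Set Y}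
    (hs : MeasurableSet s) {a : ℝ} {g : C(Y, ℝ)} (hg : 0 ≤ g) (hgs : ∀ x ∈ s, a ≤ g x) :
    ν.real s * a ≤ integralFunctional ν g := by
  have hint := integrable_continuousMap ν g
  calc ν.real s * a = ∫ _ in s, a ∂ν := by rw [setIntegral_const, smul_eq_mul]
    _ ≤ ∫ x in s, g x ∂ν := setIntegral_mono_on (integrable_const a) hint.integrableOn hs hgs
    _ ≤ ∫ x, g x ∂ν := setIntegral_le_integral hint (.of_forall hg)

end IntegralFunctional

section FellerOperator

variable {Y Z : Type*} [TopologicalSpace Y] [CompactSpace Y] [MeasurableSpace Y]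
  [OpensMeasurableSpace Y] [TopologicalSpace Z] [CompactSpace Z] [MeasurableSpace Z]
  [BorelSpace Z] [HasOuterApproxClosed Z]

/-- The operator `𝔓 g (u) = ∫ g dP(u,·)` of a Feller kernel `P`, as a bounded operator between
spaces of continuous functions. -/
def fellerOp (P : C(Y, FiniteMeasure Z)) : C(Z, ℝ) →L[ℝ] C(Y, ℝ) :=
  LinearMap.mkContinuous
    { toFun := fun g => ⟨fun u => integralFunctional (P u : Measure Z) g,
        (FiniteMeasure.continuous_integral_boundedContinuousFunction
          (BoundedContinuousFunction.mkOfCompact g)).comp P.continuous⟩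
      map_add' := fun f g => ContinuousMap.ext fun _ => map_add (integralFunctional _) f g
      map_smul' := fun c g => ContinuousMap.ext fun _ => map_smul (integralFunctional _) c g }
    (fellerKernel P).bound.toReal fun g => by
      refine (ContinuousMap.norm_le _ (by positivity)).2 fun u => ?_
      refine (integralFunctional (P u : Measure Z)).le_of_opNorm_le
        ((norm_integralFunctional_le _).trans ?_) g
      exact ENNReal.toReal_mono (fellerKernel P).bound_ne_top
        ((fellerKernel P).measure_le_bound u Set.univ)

theorem fellerOp_nonneg (P : C(Y, FiniteMeasure Z)) {g : C(Z, ℝ)} (hg : 0 ≤ g) :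
    0 ≤ fellerOp P g :=
  fun _ => integral_nonneg hg

theorem integralFunctional_fellerOp (P : C(Y, FiniteMeasure Z)) (ν : Measure Y)
    [IsFiniteMeasure ν] (g : C(Z, ℝ)) :
    integralFunctional ν (fellerOp P g) = integralFunctional (ν.bind (fellerKernel P)) g := by
  have hint := integrable_continuousMap (ν.bind (fellerKernel P)) g
  simp only [integralFunctional_apply]
  rw [Measure.comp_eq_comp_const_apply] at hint ⊢
  exact (ProbabilityTheory.Kernel.integral_comp hint).symm

end FellerOperator

theorem supN_coe {Y : Type} [TopologicalSpace Y] [CompactSpace Y] (g : C(Y, ℝ)) :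
    supN g = ‖g‖ :=
  (ContinuousMap.norm_eq_iSup_norm g).symm

section Iterates

variable {Y : Type} [TopologicalSpace Y] [CompactSpace Y] [MeasurableSpace Y] [BorelSpace Y]
  [HasOuterApproxClosed Y]

theorem iterate_fellerOp_nonneg (P : C(Y, FiniteMeasure Y)) {g : C(Y, ℝ)} (hg : 0 ≤ g) (k : ℕ) :
    0 ≤ (fellerOp P)^[k] g :=
  Function.Iterate.rec _ hg (fun _ => fellerOp_nonneg P) k

theorem coe_iterate_fellerOp (P : C(Y, FiniteMeasure Y)) (g : C(Y, ℝ)) (k : ℕ) :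
    ⇑((fellerOp P)^[k] g) = opIter P k g := by
  induction k with
  | zero => rfl
  | succ k ih =>
    rw [Function.iterate_succ_apply']
    exact congrArg (opP P) ih

theorem birkhoffAverage_fellerOp_apply (P : C(Y, FiniteMeasure Y)) (g : C(Y, ℝ)) (n : ℕ) (u : Y) :
    birkhoffAverage ℝ (fellerOp P) id n g u =
      (n : ℝ)⁻¹ * ∑ k ∈ Finset.range n, opIter P k g u := by
  simp [birkhoffAverage, birkhoffSum, ← coe_iterate_fellerOp]

instance isFiniteMeasure_kIter (P : C(Y, FiniteMeasure Y)) (k : ℕ) (u : Y) :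
    IsFiniteMeasure (kIter P k u) := by
  induction k with
  | zero => exact inferInstanceAs (IsFiniteMeasure (Measure.dirac u))
  | succ k ih => exact inferInstanceAs (IsFiniteMeasure ((kIter P k u).bind (fellerKernel P)))

theorem integralFunctional_kIter (P : C(Y, FiniteMeasure Y)) (g : C(Y, ℝ)) (k : ℕ) (u : Y) :
    integralFunctional (kIter P k u) g = (fellerOp P)^[k] g u := by
  induction k generalizing g with
  | zero => exact integral_dirac' g u g.continuous.stronglyMeasurable
  | succ k ih =>
    rw [Function.iterate_succ_apply, ← ih, integralFunctional_fellerOp]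
    rfl

theorem integralFunctional_iterate_fellerOp {P : C(Y, FiniteMeasure Y)} {μ : Measure Y}
    [IsFiniteMeasure μ] (hμ : μ.bind (fellerKernel P) = μ) (g : C(Y, ℝ)) (k : ℕ) :
    integralFunctional μ ((fellerOp P)^[k] g) = integralFunctional μ g := by
  induction k with
  | zero => rfl
  | succ k ih =>
    rw [Function.iterate_succ_apply', integralFunctional_fellerOp, ← ih]
    simp only [hμ]

end Iterates

section UniformIrreducibility

variable {P : C(X, FiniteMeasure X)}

namespace UnifIrred

theorem exists_mul_le_iterate_fellerOp (hirr : UnifIrred P) {r : ℝ} (hr : 0 < r) :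
    ∃ m : ℕ, ∃ p > 0, ∀ (g : C(X, ℝ)) (v : X) (a : ℝ), 0 ≤ g → 0 ≤ a →
      (∀ x ∈ Metric.closedBall v r, a ≤ g x) → ∀ u, p * a ≤ (fellerOp P)^[m] g u := by
  obtain ⟨m, -, p, hp, hball⟩ := hirr r hr
  refine ⟨m, p, hp, fun g v a hg ha hga u => ?_⟩
  have hpball : p ≤ (kIter P m u).real (Metric.closedBall v r) :=
    (ENNReal.ofReal_le_iff_le_toReal (measure_ne_top _ _)).1 (hball u v)
  rw [← integralFunctional_kIter]
  exact (mul_le_mul_of_nonneg_right hpball ha).trans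
    (mul_measureReal_le_integralFunctional _ Metric.isClosed_closedBall.measurableSet hg hga)

theorem exists_pos_le_iterate_fellerOp (hirr : UnifIrred P) {g : C(X, ℝ)} (hg : 0 ≤ g)
    (hg₀ : g ≠ 0) : ∃ m : ℕ, ∃ a > 0, ∀ u, a ≤ (fellerOp P)^[m] g u := by
  obtain ⟨v, hv⟩ := DFunLike.ne_iff.1 hg₀
  have hv : 0 < g v := (hg v).lt_of_ne' hv
  obtain ⟨r, hr, hball⟩ := Metric.nhds_basis_closedBall.eventually_iff.1
    (g.continuous.continuousAt.eventually (lt_mem_nhds (half_lt_self hv)))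
  obtain ⟨m, p, hp, hlower⟩ := hirr.exists_mul_le_iterate_fellerOp hr
  exact ⟨m, p * (g v / 2), by positivity,
    hlower g v _ hg (by positivity) fun x hx => (hball hx).le⟩

theorem pos_of_isFixedPt (hirr : UnifIrred P) {g : C(X, ℝ)} (hg : 0 ≤ g) (hg₀ : g ≠ 0)
    (hfix : Function.IsFixedPt (fellerOp P) g) (u : X) : 0 < g u := by
  obtain ⟨m, a, ha, hlower⟩ := hirr.exists_pos_le_iterate_fellerOp hg hg₀
  have hau := hlower u
  rw [hfix.iterate m] at hau
  exact ha.trans_le hau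

theorem exists_eq_smul_of_isFixedPt [Nonempty X] (hirr : UnifIrred P) {g h : C(X, ℝ)}
    (hg : Function.IsFixedPt (fellerOp P) g) (hh : Function.IsFixedPt (fellerOp P) h)
    (hpos : ∀ x, 0 < h x) : ∃ t : ℝ, g = t • h := by
  -- For the least ratio `t` of `g` to `h`, the fixed point `g - t • h` is non-negative and has a
  -- zero, which irreducibility forbids unless it is identically zero.
  obtain ⟨u, hu⟩ := (g.continuous.div h.continuous fun x => (hpos x).ne').exists_forall_le'
    (x₀ := Classical.arbitrary X) (by simp)
  set t := g u / h u
  have hnonneg : 0 ≤ g - t • h := fun x => sub_nonneg.2 ((le_div_iff₀ (hpos x)).1 (hu x))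
  have hfix : Function.IsFixedPt (fellerOp P) (g - t • h) := by
    rw [Function.IsFixedPt, map_sub, map_smul, hg, hh]
  have hvanish : (g - t • h) u = 0 := sub_eq_zero.2 (div_mul_cancel₀ _ (hpos u).ne').symm
  refine ⟨t, sub_eq_zero.1 (by_contra fun hne => ?_)⟩
  exact (hirr.pos_of_isFixedPt hnonneg hne hfix u).ne' hvanish

variable {μ : Measure X} [IsProbabilityMeasure μ]

theorem eq_of_isFixedPt_of_integral_eq_one (hirr : UnifIrred P) {g h : C(X, ℝ)}
    (hg : Function.IsFixedPt (fellerOp P) g) (hh : Function.IsFixedPt (fellerOp P) h)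
    (hpos : ∀ x, 0 < h x) (hgμ : integralFunctional μ g = 1) (hhμ : integralFunctional μ h = 1) :
    g = h := by
  have := nonempty_of_isProbabilityMeasure μ
  obtain ⟨t, rfl⟩ := hirr.exists_eq_smul_of_isFixedPt hg hh hpos
  rw [map_smul, hhμ, smul_eq_mul, mul_one] at hgμ
  rw [hgμ, one_smul]

theorem integralFunctional_pos (hirr : UnifIrred P) (hμ : μ.bind (fellerKernel P) = μ)
    {g : C(X, ℝ)} (hg : 0 ≤ g) (hg₀ : g ≠ 0) : 0 < integralFunctional μ g := by
  obtain ⟨m, a, ha, hlower⟩ := hirr.exists_pos_le_iterate_fellerOp hg hg₀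
  rw [← integralFunctional_iterate_fellerOp hμ g m]
  exact ha.trans_le (le_integralFunctional_of_forall_le μ hlower)

theorem isBounded_range_iterate_fellerOp (hirr : UnifIrred P) (hμ : μ.bind (fellerKernel P) = μ)
    {f : C(X, ℝ)} (hf : 0 ≤ f)
    (hequi : UniformEquicontinuous fun k => ⇑(‖(fellerOp P)^[k] f‖⁻¹ • (fellerOp P)^[k] f)) :
    Bornology.IsBounded (Set.range fun k => (fellerOp P)^[k] f) := by
  have := nonempty_of_isProbabilityMeasure μ
  obtain ⟨δ, hδ, hosc⟩ := Metric.uniformEquicontinuous_iff.1 hequi (1 / 2) one_half_pos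
  obtain ⟨m, p, hp, hlower⟩ := hirr.exists_mul_le_iterate_fellerOp (half_pos hδ)
  refine isBounded_iff_forall_norm_le.2 ⟨2 * integralFunctional μ f / p, ?_⟩
  rintro _ ⟨k, rfl⟩
  have hk := iterate_fellerOp_nonneg P hf k
  obtain ⟨v, hv⟩ := exists_forall_dist_lt_half_norm_le hk fun x y hxy => hosc x y hxy k
  have hhalf : p * (‖(fellerOp P)^[k] f‖ / 2) ≤ integralFunctional μ f := by
    rw [← integralFunctional_iterate_fellerOp hμ f (m + k), Function.iterate_add_apply]
    exact le_integralFunctional_of_forall_le μ <| hlower _ v _ hk (by positivity) fun y hy =>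
      hv y ((Metric.mem_closedBall.1 hy).trans_lt (half_lt_self hδ))
  rw [le_div_iff₀ hp]
  linarith

theorem exists_isFixedPt_tendsto_birkhoffAverage (hirr : UnifIrred P)
    (hμ : μ.bind (fellerKernel P) = μ) {f : C(X, ℝ)} (hf : 0 ≤ f)
    (hequi : UniformEquicontinuous fun k => ⇑(‖(fellerOp P)^[k] f‖⁻¹ • (fellerOp P)^[k] f)) :
    ∃ h : C(X, ℝ), 0 ≤ h ∧ Function.IsFixedPt (fellerOp P) h ∧
      integralFunctional μ h = integralFunctional μ f ∧
      ∃ φ : ℕ → ℕ, StrictMono φ ∧ (∀ j, 1 ≤ φ j) ∧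
        Tendsto (fun j => birkhoffAverage ℝ (fellerOp P) id (φ j) f) atTop (𝓝 h) := by
  have hbdd := hirr.isBounded_range_iterate_fellerOp hμ hf hequi
  obtain ⟨h, hh, hfix, hlim⟩ := _root_.exists_isFixedPt_tendsto_birkhoffAverage (fellerOp P)
    (totallyBounded_range_of_equicontinuous hbdd
      (uniformEquicontinuous_of_normalized hbdd hequi).equicontinuous)
  have hnonneg : 0 ≤ h := fun x =>
    mapsTo_closedConvexHull (ContinuousMap.evalCLM ℝ x) (convex_Ici 0) isClosed_Ici
      (Set.mapsTo_range_iff.2 fun k => iterate_fellerOp_nonneg P hf k x) hh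
  have hint : integralFunctional μ h = integralFunctional μ f :=
    mapsTo_closedConvexHull (integralFunctional μ) (convex_singleton _) isClosed_singleton
      (Set.mapsTo_range_iff.2 fun k => integralFunctional_iterate_fellerOp hμ f k) hh
  exact ⟨h, hnonneg, hfix, hint, hlim⟩

theorem exists_normalized_isFixedPt_tendsto_birkhoffAverage (hirr : UnifIrred P)
    (hμ : μ.bind (fellerKernel P) = μ) {f : C(X, ℝ)} (hf : 0 ≤ f) (hf₀ : f ≠ 0)
    (hequi : UniformEquicontinuous fun k => ⇑(‖(fellerOp P)^[k] f‖⁻¹ • (fellerOp P)^[k] f)) :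
    ∃ h : C(X, ℝ), (∀ x, 0 < h x) ∧ Function.IsFixedPt (fellerOp P) h ∧
      integralFunctional μ h = 1 ∧
      ∃ c : ℝ, 0 < c ∧ ∃ φ : ℕ → ℕ, StrictMono φ ∧ (∀ j, 1 ≤ φ j) ∧
        Tendsto (fun j => c • birkhoffAverage ℝ (fellerOp P) id (φ j) f) atTop (𝓝 h) := by
  obtain ⟨h, hh, hfix, hint, φ, hφ, hφ₁, hlim⟩ :=
    hirr.exists_isFixedPt_tendsto_birkhoffAverage hμ hf hequi
  have hfμ := hirr.integralFunctional_pos hμ hf hf₀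
  have hh₀ : h ≠ 0 := by
    rintro rfl
    exact hfμ.ne ((map_zero _).symm.trans hint)
  refine ⟨(integralFunctional μ f)⁻¹ • h,
    fun x => mul_pos (inv_pos.2 hfμ) (hirr.pos_of_isFixedPt hh hh₀ hfix x), ?_, ?_,
    _, inv_pos.2 hfμ, φ, hφ, hφ₁, hlim.const_smul _⟩
  · rw [Function.IsFixedPt, map_smul, hfix]
  · rw [map_smul, hint, smul_eq_mul, inv_mul_cancel₀ hfμ.ne']

end UnifIrred

end UniformIrreducibility

theorem UnifFeller.uniformEquicontinuous_normalized {P : C(X, FiniteMeasure X)} {C : Set (X → ℝ)}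
    (hUF : UnifFeller P C) {f : C(X, ℝ)} (hf : ⇑f ∈ C) :
    UniformEquicontinuous fun k => ⇑(‖(fellerOp P)^[k] f‖⁻¹ • (fellerOp P)^[k] f) := by
  have hequi := hUF f hf
  simp only [← coe_iterate_fellerOp, supN_coe] at hequi
  exact hequi

theorem tendstoUniformly_of_tendsto_smul_birkhoffAverage {P : C(X, FiniteMeasure X)}
    {f h : C(X, ℝ)} {c : ℝ} {φ : ℕ → ℕ}
    (hlim : Tendsto (fun j => c • birkhoffAverage ℝ (fellerOp P) id (φ j) f) atTop (𝓝 h)) :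
    TendstoUniformly
      (fun (j : ℕ) (u : X) => c * ((φ j : ℝ)⁻¹ * ∑ l ∈ Finset.range (φ j), opIter P l f u))
      h atTop := by
  simp only [← birkhoffAverage_fellerOp_apply]
  exact ContinuousMap.tendsto_iff_tendstoUniformly.1 hlim

theorem statement11_general (P : X → FiniteMeasure X) (hFeller : Continuous P)
    (C : Set (X → ℝ)) (hC : C.Nonempty)
    (hCcont : ∀ f ∈ C, Continuous f) (hCnonneg : ∀ f ∈ C, 0 ≤ f) (hCnz : ∀ f ∈ C, f ≠ 0)
    (hUF : UnifFeller P C)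
    (hUI : UnifIrred P)
    (μ : ProbabilityMeasure X)
    (hstat : (μ : Measure X).bind (fun v => (P v : Measure X)) = (μ : Measure X)) :
    ∃ h : X → ℝ, Continuous h ∧ (∀ x, 0 < h x) ∧
      (∀ u, opP P h u = h u) ∧
      (∫ x, h x ∂(μ : Measure X)) = 1 ∧
      ∀ f ∈ C, ∃ c : ℝ, 0 < c ∧ ∃ φ : ℕ → ℕ, StrictMono φ ∧ (∀ j, 1 ≤ φ j) ∧
        TendstoUniformly
          (fun (j : ℕ) (u : X) =>
            c * ((φ j : ℝ)⁻¹ * ∑ l ∈ Finset.range (φ j), opIter P l f u))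
          h atTop := by
  lift P to C(X, FiniteMeasure X) using hFeller
  have eigenfunction (f) (hf : f ∈ C) := hUI.exists_normalized_isFixedPt_tendsto_birkhoffAverage
    (f := ⟨f, hCcont f hf⟩) hstat (hCnonneg f hf)
    (fun h => hCnz f hf (congrArg DFunLike.coe h)) (hUF.uniformEquicontinuous_normalized hf)
  obtain ⟨f₀, hf₀⟩ := hC
  obtain ⟨h, hpos, hfix, hint, -⟩ := eigenfunction f₀ hf₀
  refine ⟨h, h.continuous, hpos, DFunLike.congr_fun hfix, hint, fun f hf => ?_⟩
  obtain ⟨g, -, hgfix, hgint, c, hc, φ, hφ, hφ₁, hlim⟩ := eigenfunction f hf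
  obtain rfl := hUI.eq_of_isFixedPt_of_integral_eq_one hgfix hfix hpos hgint hint
  exact ⟨c, hc, φ, hφ, hφ₁, tendstoUniformly_of_tendsto_smul_birkhoffAverage hlim⟩

/-- **Existence of a positive eigenfunction** (Step 3 of the proof of Theorem 3.1): under the
uniform Feller and uniform irreducibility properties, if `𝔓*μ = μ` for `μ ∈ 𝒫(X)`, then there
is an everywhere positive `h ∈ C(X)` with `𝔓 h = h` and `⟨h,μ⟩ = 1`; moreover `h` can be
obtained, after a suitable normalisation, as a uniform limit point of the Cesàro averages
`k⁻¹ ∑_{l=0}^{k-1} 𝔓_l f` for any fixed `f` in the determining class. -/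
theorem statement11 (P : X → FiniteMeasure X)
    (hFeller : Continuous P) (hnz : ∀ u, P u ≠ 0)
    (C : Set (X → ℝ))
    (hCpos : ∀ f ∈ C, Continuous f ∧ ∀ x, 0 < f x)
    (hone : (fun _ : X => (1 : ℝ)) ∈ C)
    (hdet : Determining C)
    (hUF : UnifFeller P C)
    (hUI : UnifIrred P)
    (μ : ProbabilityMeasure X)
    (hstat : (μ : Measure X).bind (fun v => (P v : Measure X)) = (μ : Measure X)) :
    ∃ h : X → ℝ, Continuous h ∧ (∀ x, 0 < h x) ∧
      (∀ u, opP P h u = h u) ∧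
      (∫ x, h x ∂(μ : Measure X)) = 1 ∧
      ∀ f ∈ C, ∃ c : ℝ, 0 < c ∧ ∃ φ : ℕ → ℕ, StrictMono φ ∧ (∀ j, 1 ≤ φ j) ∧
        TendstoUniformly
          (fun (j : ℕ) (u : X) =>
            c * ((φ j : ℝ)⁻¹ * ∑ l ∈ Finset.range (φ j), opIter P l f u))
          h atTop := by
  have : Nonempty X := nonempty_of_isProbabilityMeasure (μ : Measure X)
  exact statement11_general P hFeller C ⟨_, hone⟩ (fun f hf => (hCpos f hf).1)
    (fun f hf x => ((hCpos f hf).2 x).le)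
    (fun f hf => Function.ne_iff.2 ⟨Classical.arbitrary X, ((hCpos f hf).2 _).ne'⟩) hUF hUI μ hstat
end
end
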